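/- arXiv:2305.13350 — 5 statements merged into one kernel-verified Lean document; each statement's English description precedes it below -/
import Mathlib

section
/- For every real p and every real x, the derivative of Λ^e_p satisfies (d/dx) Λ^e_p(x) = -(p+1) Λ^o_{p+1}(x), and the derivative of Λ^o_p satisfies (d/dx) Λ^o_p(x) = Λ^e_{p+1}(x). -/
open MeasureTheory Filter Real

/-- The even kernel function `Λ^e_p(x)`. -/
noncomputable def LamE (p x : ℝ) : ℝ :=
  (1 / Real.sqrt (2 * Real.pi)) *
    ∑' n : ℕ, (-1 : ℝ) ^ n * (∏ k ∈ Finset.range n, (p + 2 * (k : ℝ) + 1)) * x ^ (2 * n) /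
      (Nat.factorial (2 * n) : ℝ)

/-- The odd kernel function `Λ^o_p(x)`. -/
noncomputable def LamO (p x : ℝ) : ℝ :=
  (1 / Real.sqrt (2 * Real.pi)) *
    ∑' n : ℕ, (-1 : ℝ) ^ n * (∏ k ∈ Finset.range n, (p + 2 * ((k : ℝ) + 1))) * x ^ (2 * n + 1) /
      (Nat.factorial (2 * n + 1) : ℝ)

lemma sE (q x : ℝ) : Summable fun n : ℕ => (-1 : ℝ) ^ n * (∏ k ∈ Finset.range n, (q + 2 * (k : ℝ))) *
    x ^ (2 * n) / (Nat.factorial (2 * n) : ℝ) := by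
  apply summable_of_ratio_norm_eventually_le (r := 1/2) (by norm_num)
  filter_upwards [eventually_ge_atTop (⌈|q|⌉₊), eventually_ge_atTop (⌈2 * x^2⌉₊)] with n h1 h2
  have h1 : |q| ≤ n := Nat.ceil_le.1 h1
  have h2 : 2 * x^2 ≤ n := Nat.ceil_le.1 h2
  have e : (-1 : ℝ) ^ (n+1) * (∏ k ∈ Finset.range (n+1), (q + 2 * (k : ℝ))) *
    x ^ (2 * (n+1)) / (Nat.factorial (2 * (n+1)) : ℝ) =
    (-((q + 2 * n) * x^2 / ((2*n+1)*(2*n+2)))) * ((-1 : ℝ) ^ n * (∏ k ∈ Finset.range n, (q + 2 * (k : ℝ))) *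
    x ^ (2 * n) / (Nat.factorial (2 * n) : ℝ)) := by
    rw [Finset.prod_range_succ, show 2 * (n+1) = 2*n+1+1 by ring, Nat.factorial_succ, Nat.factorial_succ]
    have : (Nat.factorial (2 * n) : ℝ) ≠ 0 := by positivity
    push_cast
    field_simp
    ring
  rw [e, norm_mul]
  apply mul_le_mul_of_nonneg_right _ (norm_nonneg _)
  have hn : (0:ℝ) ≤ n := n.cast_nonneg
  have h3 : |q + 2 * n| ≤ 2 * (2 * n + 1) := by
    rw [abs_le] at *; constructor <;> linarith
  rw [norm_neg, norm_div, norm_mul, Real.norm_eq_abs, Real.norm_of_nonneg (sq_nonneg x),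
    Real.norm_of_nonneg (by positivity), div_le_iff₀ (by positivity)]
  calc |q + 2 * n| * x^2 ≤ (2 * (2 * n + 1)) * (n/2) := by
        apply mul_le_mul h3 (by linarith) (by positivity) (by positivity)
    _ ≤ _ := by nlinarith

lemma sO (q x : ℝ) : Summable fun n : ℕ => (-1 : ℝ) ^ n * (∏ k ∈ Finset.range n, (q + 2 * (k : ℝ))) *
    x ^ (2 * n + 1) / (Nat.factorial (2 * n + 1) : ℝ) := by
  refine Summable.of_norm_bounded (((sE q x).norm).mul_left |x|) fun n => ?_
  have e : (-1 : ℝ) ^ n * (∏ k ∈ Finset.range n, (q + 2 * (k : ℝ))) *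
    x ^ (2 * n + 1) / (Nat.factorial (2 * n + 1) : ℝ) = (1 / (2 * n + 1)) * (x * ((-1 : ℝ) ^ n * (∏ k ∈ Finset.range n, (q + 2 * (k : ℝ))) *
    x ^ (2 * n) / (Nat.factorial (2 * n) : ℝ))) := by
    rw [Nat.factorial_succ]
    have : (Nat.factorial (2 * n) : ℝ) ≠ 0 := by positivity
    push_cast
    field_simp
    ring
  rw [e, norm_mul, norm_mul x, Real.norm_eq_abs x]
  apply mul_le_of_le_one_left (by positivity)
  rw [Real.norm_of_nonneg (by positivity), div_le_one (by positivity)]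
  have hn : (0:ℝ) ≤ n := n.cast_nonneg
  linarith

lemma dO (q x : ℝ) : HasDerivAt (fun y => ∑' n : ℕ, (-1 : ℝ) ^ n * (∏ k ∈ Finset.range n, (q + 2 * (k : ℝ))) *
    y ^ (2 * n + 1) / (Nat.factorial (2 * n + 1) : ℝ))
    (∑' n : ℕ, (-1 : ℝ) ^ n * (∏ k ∈ Finset.range n, (q + 2 * (k : ℝ))) *
    x ^ (2 * n) / (Nat.factorial (2 * n) : ℝ)) x := by
  refine hasDerivAt_tsum_of_isPreconnected (t := Metric.ball 0 (|x|+1)) (y₀ := x)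
    (g' := fun n y => (-1 : ℝ) ^ n * (∏ k ∈ Finset.range n, (q + 2 * (k : ℝ))) *
    y ^ (2 * n) / (Nat.factorial (2 * n) : ℝ))
    (sE q (|x|+1)).norm Metric.isOpen_ball
    (convex_ball _ _).isPreconnected ?_ ?_ (by simp) (sO q x) (by simp)
  · intro n y _
    have := ((hasDerivAt_pow (2*n+1) y).const_mul ((-1 : ℝ) ^ n * (∏ k ∈ Finset.range n, (q + 2 * (k : ℝ))))).div_const
      (Nat.factorial (2 * n + 1) : ℝ)
    refine this.congr_deriv ?_
    rw [Nat.factorial_succ]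
    have : (Nat.factorial (2 * n) : ℝ) ≠ 0 := by positivity
    push_cast
    field_simp
  · intro n y hy
    have hy : |y| ≤ |x| + 1 := by simpa using (mem_ball_zero_iff.1 hy).le
    simp only [norm_div, norm_mul, norm_pow, Real.norm_eq_abs]
    rw [abs_of_nonneg (by positivity : 0 ≤ |x| + 1)]
    gcongr

lemma dE (q x : ℝ) : HasDerivAt (fun y => ∑' n : ℕ, (-1 : ℝ) ^ n * (∏ k ∈ Finset.range n, (q + 2 * (k : ℝ))) *
    y ^ (2 * n) / (Nat.factorial (2 * n) : ℝ))
    (-q * ∑' n : ℕ, (-1 : ℝ) ^ n * (∏ k ∈ Finset.range n, (q + 2 + 2 * (k : ℝ))) *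
    x ^ (2 * n + 1) / (Nat.factorial (2 * n + 1) : ℝ)) x := by
  set g' : ℕ → ℝ → ℝ := fun n y => (-1 : ℝ) ^ n * (∏ k ∈ Finset.range n, (q + 2 * (k : ℝ))) *
    ((2 * n : ℕ) * y ^ (2 * n - 1)) / (Nat.factorial (2 * n) : ℝ) with hg'
  have h0 : ∀ y, g' 0 y = 0 := by intro y; simp [hg']
  have h1 : ∀ n y, g' (n+1) y = -q * ((-1 : ℝ) ^ n * (∏ k ∈ Finset.range n, (q + 2 + 2 * (k : ℝ))) *
    y ^ (2 * n + 1) / (Nat.factorial (2 * n + 1) : ℝ)) := by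
    intro n y
    simp only [hg']
    rw [Finset.prod_range_succ', show 2 * (n+1) = 2*n+1+1 by ring, Nat.factorial_succ (2*n+1),
      Nat.add_sub_cancel]
    have : (Nat.factorial (2 * n + 1) : ℝ) ≠ 0 := by positivity
    have e : ∀ k : ℕ, q + 2 * ((k + 1 : ℕ) : ℝ) = q + 2 + 2 * k := by intro k; push_cast; ring
    simp only [e]
    push_cast
    field_simp
    ring
  have hs : ∀ y, Summable fun n => g' n y := by
    intro y
    rw [← summable_nat_add_iff 1]
    simp only [h1]
    exact (sO (q+2) y).mul_left _
  have ht : ∑' n, g' n x = -q * ∑' n : ℕ, (-1 : ℝ) ^ n * (∏ k ∈ Finset.range n, (q + 2 + 2 * (k : ℝ))) *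
    x ^ (2 * n + 1) / (Nat.factorial (2 * n + 1) : ℝ) := by
    rw [(hs x).tsum_eq_zero_add, h0, zero_add, ← tsum_mul_left]
    simp only [h1]
  rw [← ht]
  refine hasDerivAt_tsum_of_isPreconnected (t := Metric.ball 0 (|x|+1)) (y₀ := x)
    (hs (|x|+1)).norm Metric.isOpen_ball
    (convex_ball _ _).isPreconnected ?_ ?_ (by simp) (sE q x) (by simp)
  · intro n y _
    exact ((hasDerivAt_pow (2*n) y).const_mul _).div_const _
  · intro n y hy
    have hy : |y| ≤ |x| + 1 := by simpa using (mem_ball_zero_iff.1 hy).le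
    simp only [hg', norm_div, norm_mul, norm_pow, Real.norm_eq_abs]
    rw [abs_of_nonneg (by positivity : 0 ≤ |x| + 1)]
    gcongr

/-- Derivative formulas: `(Λ^e_p)'(x) = -(p+1) Λ^o_{p+1}(x)` and `(Λ^o_p)'(x) = Λ^e_{p+1}(x)`. -/
theorem stmt_1 (p x : ℝ) :
    deriv (fun y => LamE p y) x = -(p + 1) * LamO (p + 1) x ∧
    deriv (fun y => LamO p y) x = LamE (p + 1) x := by
  have eE : ∀ p y, LamE p y = (1 / Real.sqrt (2 * Real.pi)) *
      ∑' n : ℕ, (-1 : ℝ) ^ n * (∏ k ∈ Finset.range n, ((p + 1) + 2 * (k : ℝ))) *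
      y ^ (2 * n) / (Nat.factorial (2 * n) : ℝ) := by
    intro p y
    have e : ∀ k : ℕ, p + 2 * (k : ℝ) + 1 = (p + 1) + 2 * (k : ℝ) := by intro k; ring
    simp only [LamE, e]
  have eO : ∀ p y, LamO p y = (1 / Real.sqrt (2 * Real.pi)) *
      ∑' n : ℕ, (-1 : ℝ) ^ n * (∏ k ∈ Finset.range n, ((p + 2) + 2 * (k : ℝ))) *
      y ^ (2 * n + 1) / (Nat.factorial (2 * n + 1) : ℝ) := by
    intro p y
    have e : ∀ k : ℕ, p + 2 * ((k : ℝ) + 1) = (p + 2) + 2 * (k : ℝ) := by intro k; ring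
    simp only [LamO, e]
  constructor
  · simp only [eE, eO]
    rw [((dE (p+1) x).const_mul _).deriv]
    ring
  · simp only [eE, eO]
    rw [((dO (p+2) x).const_mul _).deriv, show p + 1 + 1 = p + 2 by ring]
end

section
/- For every nonnegative integer n, every real p, and every real x, the 2n-th derivative of Λ^e_p satisfies (d^{2n}/dx^{2n}) Λ^e_p(x) = (-1)^n (p+1)(p+3)⋯(p+2n-1) Λ^e_{p+2n}(x), and the 2n-th derivative of Λ^o_p satisfies (d^{2n}/dx^{2n}) Λ^o_p(x) = (-1)^n (p+2)(p+4)⋯(p+2n) Λ^o_{p+2n}(x) (for n = 0 the empty products equal 1). -/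
open MeasureTheory Filter Real

noncomputable def auxE (q : ℝ) (n : ℕ) (x : ℝ) : ℝ :=
  (-1 : ℝ) ^ n * (∏ k ∈ Finset.range n, (q + 2 * (k : ℝ))) * x ^ (2 * n) /
      (Nat.factorial (2 * n) : ℝ)

noncomputable def auxO (q : ℝ) (n : ℕ) (x : ℝ) : ℝ :=
  (-1 : ℝ) ^ n * (∏ k ∈ Finset.range n, (q + 2 * (k : ℝ))) * x ^ (2 * n + 1) /
      (Nat.factorial (2 * n + 1) : ℝ)

lemma auxE_succ (q : ℝ) (n : ℕ) (x : ℝ) :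
    auxE q (n + 1) x = - ((q + 2 * n) * x ^ 2 / ((2 * n + 1) * (2 * n + 2))) * auxE q n x := by
  unfold auxE
  have h1 : (2 * (n : ℝ) + 1) ≠ 0 := by positivity
  have h2 : (2 * (n : ℝ) + 2) ≠ 0 := by positivity
  have h3 : ((2 * n).factorial : ℝ) ≠ 0 := by positivity
  rw [Finset.prod_range_succ, show 2 * (n + 1) = 2 * n + 1 + 1 by ring, Nat.factorial_succ,
    Nat.factorial_succ]
  push_cast
  rw [show (2 * (n : ℝ) + 1 + 1) = 2 * n + 2 by ring]
  field_simp
  ring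

lemma auxE_summable (q x : ℝ) : Summable fun n => auxE q n x := by
  refine summable_of_ratio_norm_eventually_le (r := 1 / 2) (by norm_num) ?_
  filter_upwards [eventually_ge_atTop ⌈|q| + 2 * x ^ 2⌉₊] with n hn
  have hn' : |q| + 2 * x ^ 2 ≤ n := Nat.ceil_le.mp hn
  rw [auxE_succ, norm_mul]
  gcongr
  have hx : 0 ≤ x ^ 2 := sq_nonneg x
  have hq : 0 ≤ |q| := abs_nonneg q
  rw [norm_neg, Real.norm_eq_abs, abs_div, abs_mul, abs_of_nonneg hx,
    abs_of_pos (show (0 : ℝ) < (2 * n + 1) * (2 * n + 2) by positivity),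
    div_le_iff₀ (by positivity)]
  have h1 : |q + 2 * n| ≤ 3 * n := by
    refine (abs_add_le _ _).trans ?_
    rw [abs_of_nonneg (show (0 : ℝ) ≤ 2 * n by positivity)]
    linarith
  have hn0 : (0 : ℝ) ≤ n := by positivity
  calc |q + 2 * n| * x ^ 2 ≤ (3 * n) * (n / 2) := by
        gcongr; linarith
    _ ≤ _ := by nlinarith

lemma auxO_eq (q : ℝ) (n : ℕ) (x : ℝ) : auxO q n x = auxE q n x * (x / (2 * n + 1)) := by
  unfold auxE auxO
  have h1 : (2 * (n : ℝ) + 1) ≠ 0 := by positivity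
  have h3 : ((2 * n).factorial : ℝ) ≠ 0 := by positivity
  rw [Nat.factorial_succ]
  push_cast
  field_simp
  ring

lemma auxO_summable (q x : ℝ) : Summable fun n => auxO q n x := by
  refine Summable.of_norm_bounded (g := fun n => ‖auxE q n x‖ * |x|)
    ((auxE_summable q x).norm.mul_right _) fun n => ?_
  rw [auxO_eq, norm_mul]
  gcongr
  rw [Real.norm_eq_abs, abs_div, abs_of_pos (show (0 : ℝ) < 2 * n + 1 by positivity)]
  apply div_le_self (abs_nonneg _)
  have : (0 : ℝ) ≤ n := by positivity
  linarith

lemma auxE_mono (q : ℝ) (n : ℕ) {x y : ℝ} (h : |x| ≤ |y|) : ‖auxE q n x‖ ≤ ‖auxE q n y‖ := by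
  unfold auxE
  simp only [norm_div, norm_mul, norm_pow, Real.norm_eq_abs] at *
  gcongr

lemma auxO_mono (q : ℝ) (n : ℕ) {x y : ℝ} (h : |x| ≤ |y|) : ‖auxO q n x‖ ≤ ‖auxO q n y‖ := by
  unfold auxO
  simp only [norm_div, norm_mul, norm_pow, Real.norm_eq_abs] at *
  gcongr

lemma auxO_deriv (q : ℝ) (n : ℕ) (x : ℝ) : HasDerivAt (auxO q n) (auxE q n x) x := by
  unfold auxE auxO
  have h := (((hasDerivAt_pow (2 * n + 1) x).const_mul
    ((-1 : ℝ) ^ n * (∏ k ∈ Finset.range n, (q + 2 * (k : ℝ))))).div_const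
      ((2 * n + 1).factorial : ℝ))
  refine h.congr_deriv ?_
  have h1 : (2 * (n : ℝ) + 1) ≠ 0 := by positivity
  have h3 : ((2 * n).factorial : ℝ) ≠ 0 := by positivity
  rw [Nat.factorial_succ]
  push_cast
  field_simp

lemma auxE_deriv (q : ℝ) (n : ℕ) (x : ℝ) :
    HasDerivAt (auxE q (n + 1)) (-q * auxO (q + 2) n x) x := by
  unfold auxE auxO
  have h := (((hasDerivAt_pow (2 * (n + 1)) x).const_mul
    ((-1 : ℝ) ^ (n + 1) * (∏ k ∈ Finset.range (n + 1), (q + 2 * (k : ℝ))))).div_const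
      ((2 * (n + 1)).factorial : ℝ))
  refine h.congr_deriv ?_
  have h1 : (2 * (n : ℝ) + 1 + 1) ≠ 0 := by positivity
  have h3 : ((2 * n + 1).factorial : ℝ) ≠ 0 := by positivity
  rw [Finset.prod_range_succ', show 2 * (n + 1) = 2 * n + 1 + 1 by ring,
    Nat.factorial_succ (2 * n + 1)]
  have h4 : ∀ k : ℕ, q + 2 * ((k + 1 : ℕ) : ℝ) = q + 2 + 2 * k := by
    intro k; push_cast; ring
  simp only [h4, Nat.add_sub_cancel]
  push_cast
  field_simp
  ring

noncomputable def sE_s2 (q x : ℝ) : ℝ := ∑' n, auxE q n x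
noncomputable def sO_s2 (q x : ℝ) : ℝ := ∑' n, auxO q n x

lemma sO_deriv (q x : ℝ) : HasDerivAt (sO_s2 q) (sE_s2 q x) x := by
  refine hasDerivAt_tsum_of_isPreconnected (t := Metric.ball 0 (|x| + 1)) (y₀ := x)
    (auxE_summable q (|x| + 1)).norm Metric.isOpen_ball
    (convex_ball _ _).isPreconnected (fun n y _ => auxO_deriv q n y) (fun n y hy => ?_) ?_
    (auxO_summable q x) ?_
  · apply auxE_mono
    rw [mem_ball_zero_iff, Real.norm_eq_abs] at hy
    exact hy.le.trans (le_abs_self _)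
  all_goals simp

lemma sE_deriv (q x : ℝ) : HasDerivAt (sE_s2 q) (-q * sO_s2 (q + 2) x) x := by
  have h0 : sE_s2 q = fun y => 1 + ∑' n, auxE q (n + 1) y := by
    funext y
    unfold sE_s2
    rw [(auxE_summable q y).tsum_eq_zero_add]
    simp [auxE]
  rw [h0]
  apply HasDerivAt.const_add
  unfold sO_s2
  rw [← tsum_mul_left]
  refine hasDerivAt_tsum_of_isPreconnected (t := Metric.ball 0 (|x| + 1)) (y₀ := x)
    ((auxO_summable (q + 2) (|x| + 1)).norm.mul_left ‖-q‖) Metric.isOpen_ball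
    (convex_ball _ _).isPreconnected (fun n y _ => auxE_deriv q n y) (fun n y hy => ?_) ?_
    ((summable_nat_add_iff 1).2 (auxE_summable q x)) ?_
  · rw [norm_mul]
    gcongr
    apply auxO_mono
    rw [mem_ball_zero_iff, Real.norm_eq_abs] at hy
    exact hy.le.trans (le_abs_self _)
  all_goals simp

lemma LamE_eq (p : ℝ) : LamE p = fun x => (1 / Real.sqrt (2 * Real.pi)) * sE_s2 (p + 1) x := by
  funext x
  unfold LamE sE_s2 auxE
  simp only [show ∀ k : ℕ, p + 1 + 2 * (k : ℝ) = p + 2 * k + 1 by intro k; ring]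

lemma LamO_eq (p : ℝ) : LamO p = fun x => (1 / Real.sqrt (2 * Real.pi)) * sO_s2 (p + 2) x := by
  funext x
  unfold LamO sO_s2 auxO
  simp only [show ∀ k : ℕ, p + 2 + 2 * (k : ℝ) = p + 2 * (k + 1) by intro k; ring]

lemma LamE_deriv2 (p : ℝ) : deriv (deriv (LamE p)) = fun x => -(p + 1) * LamE (p + 2) x := by
  have h : deriv (LamE p) =
      fun x => (1 / Real.sqrt (2 * Real.pi)) * (-(p + 1) * sO_s2 (p + 1 + 2) x) := by
    funext x
    rw [LamE_eq]
    exact ((sE_deriv (p + 1) x).const_mul _).deriv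
  rw [h]
  funext x
  rw [(((sO_deriv (p + 1 + 2) x).const_mul _).const_mul _).deriv, LamE_eq,
    show p + 1 + 2 = p + 2 + 1 by ring]
  ring

lemma LamO_deriv2 (p : ℝ) : deriv (deriv (LamO p)) = fun x => -(p + 2) * LamO (p + 2) x := by
  have h : deriv (LamO p) = fun x => (1 / Real.sqrt (2 * Real.pi)) * sE_s2 (p + 2) x := by
    funext x
    rw [LamO_eq]
    exact ((sO_deriv (p + 2) x).const_mul _).deriv
  rw [h]
  funext x
  rw [((sE_deriv (p + 2) x).const_mul _).deriv, LamO_eq]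
  ring

/-- The `2n`-th derivatives of `Λ^e_p` and `Λ^o_p`:
`(d^{2n}/dx^{2n}) Λ^e_p(x) = (-1)^n (p+1)(p+3)⋯(p+2n-1) Λ^e_{p+2n}(x)` and
`(d^{2n}/dx^{2n}) Λ^o_p(x) = (-1)^n (p+2)(p+4)⋯(p+2n) Λ^o_{p+2n}(x)`. -/
theorem stmt_2 (n : ℕ) (p x : ℝ) :
    iteratedDeriv (2 * n) (fun y => LamE p y) x =
      (-1 : ℝ) ^ n * (∏ k ∈ Finset.range n, (p + 2 * (k : ℝ) + 1)) * LamE (p + 2 * n) x ∧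
    iteratedDeriv (2 * n) (fun y => LamO p y) x =
      (-1 : ℝ) ^ n * (∏ k ∈ Finset.range n, (p + 2 * ((k : ℝ) + 1))) * LamO (p + 2 * n) x := by
  induction n generalizing p with
  | zero => simp
  | succ n ih =>
    obtain ⟨h1, h2⟩ := ih (p + 2)
    have e : p + 2 * ((n + 1 : ℕ) : ℝ) = p + 2 + 2 * n := by push_cast; ring
    rw [show 2 * (n + 1) = 2 * n + 1 + 1 by ring, e]
    constructor
    · rw [iteratedDeriv_succ', iteratedDeriv_succ', LamE_deriv2, iteratedDeriv_const_mul_field, h1,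
        Finset.prod_range_succ']
      have h4 : ∀ k : ℕ, p + 2 * ((k + 1 : ℕ) : ℝ) + 1 = p + 2 + 2 * k + 1 := by
        intro k; push_cast; ring
      simp only [h4]
      push_cast
      ring
    · rw [iteratedDeriv_succ', iteratedDeriv_succ', LamO_deriv2, iteratedDeriv_const_mul_field, h2,
        Finset.prod_range_succ']
      have h4 : ∀ k : ℕ, p + 2 * (((k + 1 : ℕ) : ℝ) + 1) = p + 2 + 2 * (k + 1) := by
        intro k; push_cast; ring
      simp only [h4]
      push_cast
      ring
end

section
/- For every nonnegative integer n, every ρ > 0, and every real x, the derivatives of the Gaussian kernel satisfy (∂^{2n}/∂x^{2n}) G(x,ρ) = ((-1)^n (2n)!/(2^n n!)) ρ^{2n+1} Λ^e_{2n}(xρ) and (∂^{2n+1}/∂x^{2n+1}) G(x,ρ) = ((-1)^{n+1} (2n+2)!/(2^{n+1} (n+1)!)) ρ^{2n+2} Λ^o_{2n+1}(xρ). -/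
open MeasureTheory Filter Real

/-- The Gaussian kernel `G(x,ρ) = (ρ/√(2π)) e^{-(xρ)²/2}`. -/
noncomputable def Gauss (x ρ : ℝ) : ℝ :=
  ρ / Real.sqrt (2 * Real.pi) * Real.exp (-(x * ρ) ^ 2 / 2)

/-- Even terms. -/
noncomputable def tE (p : ℝ) (n : ℕ) (x : ℝ) : ℝ :=
  (-1 : ℝ) ^ n * (∏ k ∈ Finset.range n, (p + 2 * (k : ℝ) + 1)) * x ^ (2 * n) /
      (Nat.factorial (2 * n) : ℝ)

/-- Odd terms. -/
noncomputable def tO (p : ℝ) (n : ℕ) (x : ℝ) : ℝ :=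
  (-1 : ℝ) ^ n * (∏ k ∈ Finset.range n, (p + 2 * ((k : ℝ) + 1))) * x ^ (2 * n + 1) /
      (Nat.factorial (2 * n + 1) : ℝ)

lemma prod_odd_eq (n : ℕ) : (∏ k ∈ Finset.range n, (2 * (k : ℝ) + 1)) * (2 ^ n * (n.factorial : ℝ))
    = ((2 * n).factorial : ℝ) := by
  induction n with
  | zero => simp
  | succ n ih =>
    rw [Finset.prod_range_succ, show 2 * (n + 1) = 2 * n + 1 + 1 by ring, Nat.factorial_succ,
      Nat.factorial_succ, Nat.factorial_succ]
    push_cast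
    rw [← ih]
    ring

lemma prod_odd_le (p : ℝ) (hp : 0 ≤ p) (n : ℕ) :
    (∏ k ∈ Finset.range n, (p + 2 * (k : ℝ) + 1)) / ((2 * n).factorial : ℝ) ≤
      ((p + 1) / 2) ^ n / (n.factorial : ℝ) := by
  have h1 : (∏ k ∈ Finset.range n, (p + 2 * (k : ℝ) + 1)) ≤
      (p + 1) ^ n * ∏ k ∈ Finset.range n, (2 * (k : ℝ) + 1) := by
    have : (p + 1) ^ n * ∏ k ∈ Finset.range n, (2 * (k : ℝ) + 1) =
        ∏ k ∈ Finset.range n, ((p + 1) * (2 * (k : ℝ) + 1)) := by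
      rw [Finset.prod_mul_distrib]; simp
    rw [this]
    apply Finset.prod_le_prod
    · intro i _; positivity
    · intro i _
      have : 0 ≤ p * i := by positivity
      nlinarith
  have hf : (0 : ℝ) < n.factorial := by exact_mod_cast n.factorial_pos
  have hq : (0 : ℝ) < ∏ k ∈ Finset.range n, (2 * (k : ℝ) + 1) :=
    Finset.prod_pos (fun i _ => by positivity)
  rw [← prod_odd_eq, div_le_iff₀ (by positivity)]
  refine h1.trans (le_of_eq ?_)
  rw [div_pow]
  field_simp

lemma abs_tE_le (p : ℝ) (hp : 0 ≤ p) (n : ℕ) (x R : ℝ) (h : |x| ≤ R) :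
    |tE p n x| ≤ ((p + 1) / 2 * R ^ 2) ^ n / (n.factorial : ℝ) := by
  have hP : 0 ≤ ∏ k ∈ Finset.range n, (p + 2 * (k : ℝ) + 1) :=
    Finset.prod_nonneg (fun i _ => by positivity)
  have : |tE p n x| = (∏ k ∈ Finset.range n, (p + 2 * (k : ℝ) + 1)) / ((2 * n).factorial : ℝ)
      * |x| ^ (2 * n) := by
    unfold tE
    rw [abs_div, abs_mul, abs_mul, abs_pow, abs_pow, abs_of_nonneg hP]
    simp
    ring
  rw [this]
  have h2 : |x| ^ (2 * n) ≤ R ^ (2 * n) := by gcongr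
  calc _ ≤ ((p + 1) / 2) ^ n / (n.factorial : ℝ) * R ^ (2 * n) := by
        exact mul_le_mul (prod_odd_le p hp n) h2 (by positivity) (by positivity)
    _ = _ := by rw [mul_pow, ← pow_mul]; ring

lemma tO_eq (p : ℝ) (n : ℕ) (x : ℝ) : tO p n x = tE (p + 1) n x * (x / (2 * n + 1)) := by
  unfold tO tE
  have : ∀ k : ℕ, p + 2 * ((k : ℝ) + 1) = p + 1 + 2 * (k : ℝ) + 1 := fun k => by ring
  simp only [this]
  rw [Nat.factorial_succ, pow_succ]
  push_cast
  have hf : ((2 * n).factorial : ℝ) ≠ 0 := by exact_mod_cast (Nat.factorial_pos _).ne'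
  field_simp

lemma abs_tO_le (p : ℝ) (hp : 0 ≤ p) (n : ℕ) (x R : ℝ) (h : |x| ≤ R) :
    |tO p n x| ≤ ((p + 1 + 1) / 2 * R ^ 2) ^ n / (n.factorial : ℝ) * R := by
  rw [tO_eq, abs_mul]
  have h1 := abs_tE_le (p + 1) (by linarith) n x R h
  have h2 : |x / (2 * n + 1)| ≤ R := by
    rw [abs_div, abs_of_pos (by positivity : (0 : ℝ) < 2 * n + 1)]
    refine le_trans (div_le_self (abs_nonneg _) ?_) h
    have : (0 : ℝ) ≤ n := n.cast_nonneg
    linarith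
  exact mul_le_mul h1 h2 (abs_nonneg _) ((abs_nonneg _).trans h1)

lemma summable_tE (p : ℝ) (hp : 0 ≤ p) (x : ℝ) : Summable (fun n => tE p n x) :=
  Summable.of_norm_bounded (Real.summable_pow_div_factorial _)
    (fun n => abs_tE_le p hp n x |x| le_rfl)

lemma summable_tO (p : ℝ) (hp : 0 ≤ p) (x : ℝ) : Summable (fun n => tO p n x) :=
  Summable.of_norm_bounded ((Real.summable_pow_div_factorial _).mul_right _)
    (fun n => abs_tO_le p hp n x |x| le_rfl)

lemma hasDerivAt_tO (p : ℝ) (n : ℕ) (x : ℝ) : HasDerivAt (tO p n) (tE (p + 1) n x) x := by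
  have h := (((hasDerivAt_pow (2 * n + 1) x).const_mul
    ((-1 : ℝ) ^ n * (∏ k ∈ Finset.range n, (p + 2 * ((k : ℝ) + 1)))))).div_const
    (Nat.factorial (2 * n + 1) : ℝ)
  refine h.congr_deriv ?_
  unfold tE
  have : ∀ k : ℕ, p + 2 * ((k : ℝ) + 1) = p + 1 + 2 * (k : ℝ) + 1 := fun k => by ring
  simp only [this]
  rw [Nat.factorial_succ]
  push_cast
  have hf : ((2 * n).factorial : ℝ) ≠ 0 := by exact_mod_cast (Nat.factorial_pos _).ne'
  try simp only [Nat.add_sub_cancel]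
  field_simp

lemma hasDerivAt_tE (p : ℝ) (n : ℕ) (x : ℝ) :
    HasDerivAt (tE p (n + 1)) (-(p + 1) * tO (p + 1) n x) x := by
  have h := (((hasDerivAt_pow (2 * n + 1 + 1) x).const_mul
    ((-1 : ℝ) ^ (n + 1) * (∏ k ∈ Finset.range (n + 1), (p + 2 * (k : ℝ) + 1))))).div_const
    (Nat.factorial (2 * n + 1 + 1) : ℝ)
  refine h.congr_deriv ?_
  unfold tO
  rw [Finset.prod_range_succ']
  have : ∀ k : ℕ, p + 2 * ((k + 1 : ℕ) : ℝ) + 1 = p + 1 + 2 * ((k : ℝ) + 1) :=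
    fun k => by push_cast; ring
  simp only [this]
  rw [Nat.factorial_succ]
  push_cast
  have hf : ((2 * n + 1).factorial : ℝ) ≠ 0 := by exact_mod_cast (Nat.factorial_pos _).ne'
  try simp only [Nat.add_sub_cancel]
  field_simp
  ring

lemma hasDerivAt_LamO (p : ℝ) (hp : 0 ≤ p) (x : ℝ) :
    HasDerivAt (LamO p) (LamE (p + 1) x) x := by
  have key : HasDerivAt (fun y => ∑' n, tO p n y) (∑' n, tE (p + 1) n x) x := by
    refine hasDerivAt_tsum_of_isPreconnected
      (Real.summable_pow_div_factorial ((p + 1 + 1) / 2 * (|x| + 1) ^ 2))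
      (Metric.isOpen_ball (x := (0 : ℝ)) (ε := |x| + 1))
      (convex_ball (0 : ℝ) (|x| + 1)).isPreconnected
      (fun n y _ => hasDerivAt_tO p n y) (fun n y hy => ?_)
      (Metric.mem_ball_self (by positivity)) (summable_tO p hp 0) ?_
    · exact abs_tE_le (p + 1) (by linarith) n y _ ((mem_ball_zero_iff.1 hy).le)
    · simp
  exact key.const_mul (1 / Real.sqrt (2 * Real.pi))

lemma hasDerivAt_LamE (p : ℝ) (hp : 0 ≤ p) (x : ℝ) :
    HasDerivAt (LamE p) (-(p + 1) * LamO (p + 1) x) x := by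
  have key : HasDerivAt (fun y => ∑' n, tE p (n + 1) y) (∑' n, -(p + 1) * tO (p + 1) n x) x := by
    refine hasDerivAt_tsum_of_isPreconnected
      (((Real.summable_pow_div_factorial ((p + 1 + 1 + 1) / 2 * (|x| + 1) ^ 2)).mul_right
        (|x| + 1)).mul_left (p + 1))
      (Metric.isOpen_ball (x := (0 : ℝ)) (ε := |x| + 1))
      (convex_ball (0 : ℝ) (|x| + 1)).isPreconnected
      (fun n y _ => hasDerivAt_tE p n y) (fun n y hy => ?_)
      (Metric.mem_ball_self (by positivity))
      ((summable_nat_add_iff 1).2 (summable_tE p hp 0)) ?_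
    · have := abs_tO_le (p + 1) (by linarith) n y (|x| + 1) ((mem_ball_zero_iff.1 hy).le)
      rw [Real.norm_eq_abs, abs_mul, abs_neg, abs_of_nonneg (by linarith : 0 ≤ p + 1)]
      gcongr
    · simp
  have h2 := (key.const_add 1).const_mul (1 / Real.sqrt (2 * Real.pi))
  have e : LamE p = fun y => (1 / Real.sqrt (2 * Real.pi)) * (1 + ∑' n, tE p (n + 1) y) := by
    funext y
    have := (summable_tE p hp y).tsum_eq_zero_add
    have h0 : tE p 0 y = 1 := by simp [tE]
    rw [h0] at this
    rw [← this]
    rfl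
  rw [e]
  refine h2.congr_deriv ?_
  rw [tsum_mul_left]
  change _ = -(p + 1) * ((1 / Real.sqrt (2 * Real.pi)) * ∑' n, tO (p + 1) n x)
  ring

lemma LamE_zero (x : ℝ) : LamE 0 x = (1 / Real.sqrt (2 * Real.pi)) * Real.exp (-x ^ 2 / 2) := by
  unfold LamE
  congr 1
  rw [Real.exp_eq_exp_ℝ, NormedSpace.exp_eq_tsum_div]
  refine tsum_congr fun n => ?_
  have : ∀ k : ℕ, (0 : ℝ) + 2 * (k : ℝ) + 1 = 2 * k + 1 := fun k => by ring
  simp only [this]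
  rw [← prod_odd_eq]
  have hf : (n.factorial : ℝ) ≠ 0 := by exact_mod_cast (Nat.factorial_pos _).ne'
  have hq : ∏ k ∈ Finset.range n, (2 * (k : ℝ) + 1) ≠ 0 :=
    (Finset.prod_pos (fun i _ => by positivity)).ne'
  rw [div_pow, neg_pow (x ^ 2), ← pow_mul]
  field_simp

lemma even_to_odd (n : ℕ) (ρ : ℝ)
    (h : iteratedDeriv (2 * n) (fun y => Gauss y ρ) = fun x =>
      ((-1 : ℝ) ^ n * (Nat.factorial (2 * n) : ℝ) / (2 ^ n * (Nat.factorial n : ℝ))) *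
        ρ ^ (2 * n + 1) * LamE (2 * n) (x * ρ)) :
    iteratedDeriv (2 * n + 1) (fun y => Gauss y ρ) = fun x =>
      ((-1 : ℝ) ^ (n + 1) * (Nat.factorial (2 * n + 2) : ℝ) /
          (2 ^ (n + 1) * (Nat.factorial (n + 1) : ℝ))) *
        ρ ^ (2 * n + 2) * LamO (2 * n + 1) (x * ρ) := by
  rw [iteratedDeriv_succ, h]
  funext x
  have h1 := (hasDerivAt_LamE (2 * n) (by positivity) (x * ρ)).comp x (hasDerivAt_mul_const ρ)
  have h2 := h1.const_mul (((-1 : ℝ) ^ n * (Nat.factorial (2 * n) : ℝ) /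
    (2 ^ n * (Nat.factorial n : ℝ))) * ρ ^ (2 * n + 1))
  refine h2.deriv.trans ?_
  rw [Nat.factorial_succ (2 * n + 1), Nat.factorial_succ (2 * n), Nat.factorial_succ n]
  have hf : (n.factorial : ℝ) ≠ 0 := by exact_mod_cast (Nat.factorial_pos _).ne'
  push_cast
  field_simp
  ring

lemma odd_to_even (n : ℕ) (ρ : ℝ)
    (h : iteratedDeriv (2 * n + 1) (fun y => Gauss y ρ) = fun x =>
      ((-1 : ℝ) ^ (n + 1) * (Nat.factorial (2 * n + 2) : ℝ) /
          (2 ^ (n + 1) * (Nat.factorial (n + 1) : ℝ))) *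
        ρ ^ (2 * n + 2) * LamO (2 * n + 1) (x * ρ)) :
    iteratedDeriv (2 * (n + 1)) (fun y => Gauss y ρ) = fun x =>
      ((-1 : ℝ) ^ (n + 1) * (Nat.factorial (2 * (n + 1)) : ℝ) /
        (2 ^ (n + 1) * (Nat.factorial (n + 1) : ℝ))) *
        ρ ^ (2 * (n + 1) + 1) * LamE (2 * (n + 1 : ℕ)) (x * ρ) := by
  rw [show 2 * (n + 1) = 2 * n + 1 + 1 by ring, iteratedDeriv_succ, h]
  funext x
  have h1 := (hasDerivAt_LamO (2 * n + 1) (by positivity) (x * ρ)).comp x (hasDerivAt_mul_const ρ)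
  have h2 := h1.const_mul (((-1 : ℝ) ^ (n + 1) * (Nat.factorial (2 * n + 2) : ℝ) /
          (2 ^ (n + 1) * (Nat.factorial (n + 1) : ℝ))) * ρ ^ (2 * n + 2))
  refine h2.deriv.trans ?_
  rw [show (2 * ((n + 1 : ℕ) : ℝ)) = 2 * n + 1 + 1 by push_cast; ring]
  ring

lemma even_all (n : ℕ) (ρ : ℝ) :
    iteratedDeriv (2 * n) (fun y => Gauss y ρ) = fun x =>
      ((-1 : ℝ) ^ n * (Nat.factorial (2 * n) : ℝ) / (2 ^ n * (Nat.factorial n : ℝ))) *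
        ρ ^ (2 * n + 1) * LamE (2 * n) (x * ρ) := by
  induction n with
  | zero =>
    funext x
    simp [LamE_zero, Gauss]
    ring
  | succ n ih => exact odd_to_even n ρ (even_to_odd n ρ ih)

/-- Derivatives of the Gaussian kernel in terms of the `Λ` kernels:
`(∂^{2n}/∂x^{2n}) G(x,ρ) = ((-1)^n (2n)!/(2^n n!)) ρ^{2n+1} Λ^e_{2n}(xρ)` and
`(∂^{2n+1}/∂x^{2n+1}) G(x,ρ) = ((-1)^{n+1} (2n+2)!/(2^{n+1}(n+1)!)) ρ^{2n+2} Λ^o_{2n+1}(xρ)`. -/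
theorem stmt_3 (n : ℕ) (ρ : ℝ) (hρ : 0 < ρ) (x : ℝ) :
    iteratedDeriv (2 * n) (fun y => Gauss y ρ) x =
      ((-1 : ℝ) ^ n * (Nat.factorial (2 * n) : ℝ) / (2 ^ n * (Nat.factorial n : ℝ))) *
        ρ ^ (2 * n + 1) * LamE (2 * n) (x * ρ) ∧
    iteratedDeriv (2 * n + 1) (fun y => Gauss y ρ) x =
      ((-1 : ℝ) ^ (n + 1) * (Nat.factorial (2 * n + 2) : ℝ) /
          (2 ^ (n + 1) * (Nat.factorial (n + 1) : ℝ))) *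
        ρ ^ (2 * n + 2) * LamO (2 * n + 1) (x * ρ) := by
  exact ⟨congrFun (even_all n ρ) x, congrFun (even_to_odd n ρ (even_all n ρ)) x⟩
end

section
/- If p is a real number that is not a nonnegative even integer, then there exists a nonzero real constant C₁ such that Λ^e_p(x) = C₁ x^{-p-1} (1 + O(x^{-2})) as x → +∞, i.e. x^{p+1} Λ^e_p(x) − C₁ = O(x^{-2}) as x → +∞. Likewise, if p is a real number that is not a nonnegative odd integer, then there exists a nonzero real constant C₂ such that Λ^o_p(x) = C₂ x^{-p-1} (1 + O(x^{-2})) as x → +∞. -/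
open MeasureTheory Filter Real

noncomputable def rr (a b : ℝ) (n : ℕ) : ℝ := ∏ k ∈ Finset.range n, (a + k) / (b + k)

noncomputable def ph (a b z : ℝ) : ℝ := ∑' n : ℕ, rr a b n * z ^ n / (n.factorial : ℝ)

lemma rr_zero (a b : ℝ) : rr a b 0 = 1 := by simp [rr]

lemma rr_succ (a b : ℝ) (n : ℕ) : rr a b (n+1) = rr a b n * ((a + n) / (b + n)) := by
  simp only [rr, Finset.prod_range_succ]

lemma rr_succ' (a b : ℝ) (n : ℕ) : rr a b (n+1) = a / b * rr (a+1) (b+1) n := by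
  simp only [rr, Finset.prod_range_succ']
  rw [mul_comm]
  congr 1
  · simp
  · apply Finset.prod_congr rfl
    intro k _
    push_cast
    congr 1 <;> ring

lemma rr_shift (a b : ℝ) (n : ℕ) : (a + n) * rr a b n = a * rr (a+1) b n := by
  induction n with
  | zero => simp [rr]
  | succ n ih =>
    rw [rr_succ, rr_succ]
    push_cast
    calc (a + (n + 1)) * (rr a b n * ((a + n) / (b + n)))
        = ((a + n) * rr a b n) * ((a + (n + 1)) / (b + n)) := by ring
      _ = _ := by rw [ih]; ring

lemma rr_bound (a b : ℝ) (hb : 0 < b) : ∃ A : ℝ, 0 ≤ A ∧ ∀ n, |rr a b n| ≤ A ^ n := by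
  refine ⟨1 + |a| / b, by positivity, fun n => ?_⟩
  rw [rr, Finset.abs_prod]
  calc _ ≤ ∏ k ∈ Finset.range n, (1 + |a| / b) := by
        apply Finset.prod_le_prod
        · intros; positivity
        · intro k _
          have hk : (0:ℝ) ≤ k := Nat.cast_nonneg k
          rw [abs_div, abs_of_pos (show 0 < b + k by positivity), div_le_iff₀ (by positivity)]
          have h1 : |a + k| ≤ |a| + k := by
            have := abs_add_le a (k:ℝ); rwa [abs_of_nonneg hk] at this
          have h2 : (1 + |a| / b) * (b + k) = b + k + |a| + |a| / b * k := by
            field_simp; ring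
          have : 0 ≤ |a| / b * k := by positivity
          linarith
    _ = _ := by simp

lemma ph_summable (a b : ℝ) (hb : 0 < b) (z : ℝ) :
    Summable (fun n : ℕ => ‖rr a b n * z ^ n / (n.factorial : ℝ)‖) := by
  obtain ⟨A, hA, h⟩ := rr_bound a b hb
  refine Summable.of_nonneg_of_le (fun n => norm_nonneg _) (fun n => ?_)
    (Real.summable_pow_div_factorial (A * |z|))
  rw [Real.norm_eq_abs, abs_div, abs_mul, abs_pow, Nat.abs_cast, mul_pow]
  gcongr
  exact h n

lemma ph_deriv (a b : ℝ) (hb : 0 < b) (z : ℝ) :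
    HasDerivAt (ph a b) (∑' n : ℕ, rr a b n * (n * z ^ (n-1)) / (n.factorial : ℝ)) z := by
  obtain ⟨A, hA, h⟩ := rr_bound a b hb
  set R := |z| + 1 with hR
  have hR0 : 0 < R := by positivity
  unfold ph
  have hu : Summable (fun n : ℕ => A ^ n * (n * R ^ (n-1)) / (n.factorial : ℝ)) := by
    rw [← summable_nat_add_iff 1]
    have := (Real.summable_pow_div_factorial (A * R)).mul_left A
    refine this.congr fun n => ?_
    rw [Nat.factorial_succ]
    push_cast
    have : (n.factorial : ℝ) ≠ 0 := by positivity
    field_simp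
    ring
  refine hasDerivAt_tsum_of_isPreconnected (t := Metric.ball 0 R) (y₀ := 0) hu Metric.isOpen_ball
    (convex_ball _ _).isPreconnected (g := fun n y => rr a b n * y ^ n / (n.factorial : ℝ))
    (g' := fun n y => rr a b n * (n * y ^ (n-1)) / (n.factorial : ℝ)) ?_ ?_ ?_ ?_ ?_
  · intro n y _
    exact ((hasDerivAt_pow n y).const_mul _).div_const _
  · intro n y hy
    have hy' : |y| ≤ R := by
      rw [Metric.mem_ball, dist_zero_right, Real.norm_eq_abs] at hy; exact hy.le
    rw [Real.norm_eq_abs, abs_div, abs_mul, abs_mul, abs_pow, Nat.abs_cast, Nat.abs_cast]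
    gcongr
    exact h n
  · simpa using hR0
  · exact (ph_summable a b hb 0).of_norm
  · simp [hR]

lemma ph_rel (a b : ℝ) (hb : 0 < b) (z : ℝ) :
    ∃ d, HasDerivAt (ph a b) d z ∧ z * d = a * ph (a+1) b z - a * ph a b z := by
  refine ⟨_, ph_deriv a b hb z, ?_⟩
  unfold ph
  rw [← tsum_mul_left, ← tsum_mul_left, ← tsum_mul_left, ← Summable.tsum_sub]
  · congr 1
    ext n
    have := rr_shift a b n
    have hz : z * (n * z ^ (n-1)) = n * z ^ n := by
      cases n with
      | zero => simp
      | succ n => simp only [Nat.add_sub_cancel]; ring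
    calc z * (rr a b n * (n * z ^ (n-1)) / (n.factorial : ℝ))
        = rr a b n * (z * (n * z ^ (n-1))) / (n.factorial : ℝ) := by ring
      _ = ((a+n) * rr a b n - a * rr a b n) * z ^ n / (n.factorial : ℝ) := by rw [hz]; ring
      _ = _ := by rw [this]; ring
  · exact (ph_summable _ b hb z).of_norm.mul_left a
  · exact (ph_summable _ b hb z).of_norm.mul_left a

lemma chu (n : ℕ) : ∀ a b : ℝ, 0 < b →
    ∑ ij ∈ Finset.HasAntidiagonal.antidiagonal n, (n.choose ij.1 : ℝ) * ((-1) ^ ij.1 * rr a b ij.1)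
      = rr (b - a) b n := by
  induction n with
  | zero => intro a b _; simp [rr]
  | succ n ih =>
    intro a b hb
    rw [Finset.sum_antidiagonal_choose_succ_mul (fun i _ => (-1) ^ i * rr a b i) n, ih a b hb]
    have h2 : ∑ ij ∈ Finset.HasAntidiagonal.antidiagonal n, (n.choose ij.2 : ℝ) *
        ((-1) ^ (ij.1+1) * rr a b (ij.1+1)) = - (a / b) * rr (b - a) (b+1) n := by
      have := ih (a+1) (b+1) (by linarith)
      rw [show b + 1 - (a+1) = b - a by ring] at this
      rw [← this, Finset.mul_sum]
      apply Finset.sum_congr rfl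
      intro ij hij
      rw [Finset.HasAntidiagonal.mem_antidiagonal] at hij
      rw [rr_succ', Nat.choose_symm_of_eq_add hij.symm, pow_succ]
      ring
    rw [h2, rr_succ]
    have h3 : rr (b-a) (b+1) n = rr (b-a) b n * (b / (b+n)) := by
      clear ih h2
      induction n with
      | zero => simp [rr, hb.ne']
      | succ n ih =>
        rw [rr_succ, rr_succ, ih]
        have : b + n ≠ 0 := by positivity
        have : b + 1 + n ≠ 0 := by positivity
        have : b + (n + 1) ≠ 0 := by positivity
        push_cast
        field_simp
        ring
    rw [h3]
    have : b + n ≠ 0 := by positivity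
    field_simp
    ring

lemma kummer (a b : ℝ) (hb : 0 < b) (z : ℝ) : ph (b - a) b z = Real.exp z * ph a b (-z) := by
  rw [mul_comm, Real.exp_eq_exp_ℝ, NormedSpace.exp_eq_tsum_div]
  unfold ph
  rw [tsum_mul_tsum_eq_tsum_sum_antidiagonal_of_summable_norm (ph_summable a b hb (-z))
    (Real.summable_pow_div_factorial z).norm]
  congr 1
  ext n
  rw [← chu n a b hb, Finset.sum_mul, Finset.sum_div]
  apply Finset.sum_congr rfl
  rintro ⟨i, j⟩ hij
  rw [Finset.HasAntidiagonal.mem_antidiagonal] at hij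
  simp only at hij ⊢
  subst hij
  have : ((i+j).factorial : ℝ) = (i+j).choose i * i.factorial * j.factorial := by
    have := Nat.choose_mul_factorial_mul_factorial (Nat.le_add_right i j)
    rw [Nat.add_sub_cancel_left] at this
    exact_mod_cast this.symm
  have hc : ((i+j).choose i : ℝ) ≠ 0 := by
    exact_mod_cast (Nat.choose_pos (Nat.le_add_right i j)).ne'
  rw [this, neg_pow z, pow_add]
  have : (i.factorial : ℝ) ≠ 0 := by positivity
  have : (j.factorial : ℝ) ≠ 0 := by positivity
  field_simp

lemma dpos (a b : ℝ) (hb : 0 < b) (z : ℝ) (hz : 0 < z) :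
    HasDerivAt (fun z => z ^ a * ph a b z) (a * z ^ (a-1) * ph (a+1) b z) z := by
  obtain ⟨d, hd, h⟩ := ph_rel a b hb z
  have h1 := (Real.hasDerivAt_rpow_const (p := a) (Or.inl hz.ne')).mul hd
  convert! h1 using 1
  have e : z ^ a = z ^ (a-1) * z := by rw [← Real.rpow_add_one hz.ne']; ring_nf
  rw [e]
  linear_combination (- z ^ (a-1)) * h

lemma dneg (a b : ℝ) (hb : 0 < b) (z : ℝ) (hz : 0 < z) :
    HasDerivAt (fun z => z ^ a * ph a b (-z)) (a * z ^ (a-1) * ph (a+1) b (-z)) z := by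
  obtain ⟨d, hd, h⟩ := ph_rel a b hb (-z)
  have h0 := hd.comp z (hasDerivAt_neg z)
  have h1 := (Real.hasDerivAt_rpow_const (p := a) (Or.inl hz.ne')).mul h0
  convert! h1 using 1
  have e : z ^ a = z ^ (a-1) * z := by rw [← Real.rpow_add_one hz.ne']; ring_nf
  simp only [Function.comp]
  rw [e]
  linear_combination (- z ^ (a-1)) * h

lemma mono_aux (f f' : ℝ → ℝ) (z0 : ℝ) (h : ∀ z ≥ z0, HasDerivAt f (f' z) z)
    (h' : ∀ z ≥ z0, 0 ≤ f' z) : MonotoneOn f (Set.Ici z0) := by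
  apply monotoneOn_of_hasDerivWithinAt_nonneg (f' := f') (convex_Ici z0)
  · exact fun z hz => (h z hz).continuousAt.continuousWithinAt
  · intro z hz
    rw [interior_Ici] at hz
    exact (h z (le_of_lt hz)).hasDerivWithinAt
  · intro z hz
    rw [interior_Ici] at hz
    exact h' z (le_of_lt hz)

lemma conv_aux (f f' : ℝ → ℝ) (z0 K m : ℝ) (hz0 : 0 < z0) (hm : m < 0)
    (h : ∀ z ≥ z0, HasDerivAt f (f' z) z) (h' : ∀ z ≥ z0, |f' z| ≤ K * z ^ (m-1)) :
    ∃ C D, ∀ z ≥ z0, |f z - C| ≤ D * z ^ m := by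
  set D := K / (-m) with hD
  have hDm : D * m = -K := by
    have : m ≠ 0 := hm.ne
    rw [hD]; field_simp
  have hp : ∀ z ≥ z0, HasDerivAt (fun z => D * z ^ m) (-K * z ^ (m-1)) z := by
    intro z hz
    have := (Real.hasDerivAt_rpow_const (p := m) (x := z) (Or.inl (by linarith))).const_mul D
    convert! this using 1
    rw [← hDm]; ring
  have m1 : MonotoneOn (fun z => f z - D * z ^ m) (Set.Ici z0) := by
    apply mono_aux _ (fun z => f' z - -K * z ^ (m-1)) z0 (fun z hz => (h z hz).sub (hp z hz))
    intro z hz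
    have := (abs_le.1 (h' z hz)).1
    linarith
  have m2 : MonotoneOn (fun z => -f z - D * z ^ m) (Set.Ici z0) := by
    apply mono_aux _ (fun z => -f' z - -K * z ^ (m-1)) z0 (fun z hz => (h z hz).neg.sub (hp z hz))
    intro z hz
    have := (abs_le.1 (h' z hz)).2
    linarith
  have hK : 0 ≤ K := by
    have := (abs_nonneg _).trans (h' z0 le_rfl)
    exact nonneg_of_mul_nonneg_left this (Real.rpow_pos_of_pos hz0 _)
  have hDn : 0 ≤ D := div_nonneg hK (by linarith)
  have key : ∀ y ≥ z0, ∀ x ≥ z0, f y - D * y ^ m ≤ f x + D * x ^ m := by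
    intro y hy x hx
    have hM : z0 ≤ max x y := le_trans hx (le_max_left _ _)
    have a1 := m1 (Set.mem_Ici.2 hy) (Set.mem_Ici.2 hM) (le_max_right x y)
    have a2 := m2 (Set.mem_Ici.2 hx) (Set.mem_Ici.2 hM) (le_max_left x y)
    simp only at a1 a2
    have : 0 ≤ D * (max x y) ^ m := mul_nonneg hDn (Real.rpow_nonneg (by linarith) _)
    linarith
  set S := (fun z => f z - D * z ^ m) '' Set.Ici z0 with hS
  refine ⟨sSup S, D, fun z hz => ?_⟩
  have b1 : f z - D * z ^ m ≤ sSup S := by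
    apply le_csSup
    · refine ⟨f z + D * z ^ m, ?_⟩
      rintro _ ⟨y, hy, rfl⟩
      exact key y hy z hz
    · exact ⟨z, hz, rfl⟩
  have b2 : sSup S ≤ f z + D * z ^ m := by
    apply csSup_le
    · exact ⟨_, z, hz, rfl⟩
    · rintro _ ⟨y, hy, rfl⟩
      exact key y hy z hz
  rw [abs_le]
  constructor <;> linarith

/-- eventual boundedness -/
def Bd (a b : ℝ) : Prop := ∃ z0 K : ℝ, 0 < z0 ∧ ∀ z ≥ z0, |z ^ a * ph a b (-z)| ≤ K

/-- limit with rate -/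
def Lm (a b C : ℝ) : Prop := ∃ z0 D : ℝ, 1 ≤ z0 ∧ ∀ z ≥ z0, |z ^ a * ph a b (-z) - C| ≤ D * z ^ (-1 : ℝ)

lemma lm_of_bd (a b : ℝ) (hb : 0 < b) (h : Bd (a+1) b) : ∃ C, Lm a b C := by
  obtain ⟨z0, K, hz0, hK⟩ := h
  obtain ⟨C, D, h⟩ := conv_aux (fun z => z ^ a * ph a b (-z)) (fun z => a * z ^ (a-1) * ph (a+1) b (-z))
    z0 (|a| * K) (-1) hz0 (by norm_num) (fun z hz => dneg a b hb z (by linarith)) (by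
      intro z hz
      have hzp : 0 < z := by linarith
      have e : a * z ^ (a-1) * ph (a+1) b (-z) = a * (z ^ (a+1) * ph (a+1) b (-z)) * z ^ (-1-1 : ℝ) := by
        rw [show a - 1 = (a+1) + (-1-1) by ring, Real.rpow_add hzp]; ring
      rw [e, abs_mul, abs_mul, abs_of_nonneg (Real.rpow_nonneg hzp.le (-1-1))]
      gcongr
      exact hK z hz)
  exact ⟨C, max z0 1, D, le_max_right _ _, fun z hz => h z (le_trans (le_max_left _ _) hz)⟩

lemma bd_of_lm (a b C : ℝ) (h : Lm a b C) : Bd a b := by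
  obtain ⟨z0, D, hz0, h⟩ := h
  refine ⟨z0, |D| + |C|, by linarith, fun z hz => ?_⟩
  have h1 := h z hz
  have h2 : z ^ (-1:ℝ) ≤ 1 := Real.rpow_le_one_of_one_le_of_nonpos (by linarith) (by norm_num)
  have h3 : 0 ≤ z ^ (-1:ℝ) := Real.rpow_nonneg (by linarith) _
  have h4 : D * z ^ (-1:ℝ) ≤ |D| := by
    calc D * z ^ (-1:ℝ) ≤ |D| * z ^ (-1:ℝ) := by gcongr; exact le_abs_self D
      _ ≤ |D| * 1 := by gcongr
      _ = _ := mul_one _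
  have h5 := abs_add_le (z ^ a * ph a b (-z) - C) C
  rw [sub_add_cancel] at h5
  linarith

lemma bd_up (a b : ℝ) (hb : 0 < b) (h : Bd a b) : Bd (a+1) b := by
  obtain ⟨z1, K, hz1, hK⟩ := h
  set c := b - (a+1) with hc
  set q := c - (a+1) with hq
  set z0 := max z1 (2 * |q|) with hz0
  have hz0p : 0 < z0 := lt_of_lt_of_le hz1 (le_max_left _ _)
  set P : ℝ → ℝ := fun z => Real.exp z * z ^ q with hP
  set G : ℝ → ℝ := fun z => z ^ c * ph c b z with hG
  have hPp : ∀ z ≥ z0, 0 < P z := fun z hz =>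
    mul_pos (Real.exp_pos _) (Real.rpow_pos_of_pos (by linarith) _)
  have dP : ∀ z ≥ z0, HasDerivAt P (Real.exp z * z ^ q + Real.exp z * (q * z ^ (q-1))) z :=
    fun z hz => (Real.hasDerivAt_exp z).mul (Real.hasDerivAt_rpow_const (Or.inl (by linarith)))
  have dP' : ∀ z ≥ z0, P z / 2 ≤ Real.exp z * z ^ q + Real.exp z * (q * z ^ (q-1)) := by
    intro z hz
    have hzp : 0 < z := by linarith
    have e : z ^ q = z ^ (q-1) * z := by rw [← Real.rpow_add_one hzp.ne']; ring_nf
    have h1 : 2 * |q| ≤ z := le_trans (le_max_right _ _) hz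
    have h2 := neg_abs_le q
    have h3 : 0 < Real.exp z * z ^ (q-1) := mul_pos (Real.exp_pos _) (Real.rpow_pos_of_pos hzp _)
    simp only [hP]
    rw [e]
    nlinarith
  have dG : ∀ z ≥ z0, HasDerivAt G (c * z ^ (c-1) * ph (c+1) b z) z :=
    fun z hz => dpos c b hb z (by linarith)
  have hK0 : 0 ≤ K := (abs_nonneg _).trans (hK z1 le_rfl)
  have dG' : ∀ z ≥ z0, |c * z ^ (c-1) * ph (c+1) b z| ≤ |c| * K * P z := by
    intro z hz
    have hzp : 0 < z := by linarith
    have e : c * z ^ (c-1) * ph (c+1) b z = c * (z ^ a * ph a b (-z)) * P z := by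
      rw [show c + 1 = b - a by rw [hc]; ring, kummer a b hb, show c - 1 = q + a by rw [hq]; ring,
        Real.rpow_add hzp]
      simp only [hP]; ring
    rw [e, abs_mul, abs_mul, abs_of_pos (hPp z hz)]
    have := hPp z hz
    gcongr
    exact hK z (le_trans (le_max_left _ _) hz)
  set B := 2 * (|c| * K) + |G z0| / P z0 with hB
  have hP0 := hPp z0 le_rfl
  have hB2 : B / 2 ≥ |c| * K := by
    have : 0 ≤ |G z0| / P z0 := by positivity
    linarith
  have hB0 : |G z0| ≤ B * P z0 := by
    have : |G z0| / P z0 * P z0 = |G z0| := by field_simp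
    have h2 : 0 ≤ 2 * (|c| * K) * P z0 := by positivity
    rw [hB, add_mul]; linarith
  have hBn : 0 ≤ B := by positivity
  have m1 : MonotoneOn (fun z => B * P z - G z) (Set.Ici z0) := by
    apply mono_aux _ _ z0 (fun z hz => ((dP z hz).const_mul B).sub (dG z hz))
    intro z hz
    have h1 := mul_le_mul_of_nonneg_left (dP' z hz) hBn
    have h2 := (abs_le.1 (dG' z hz)).2
    have h3 := mul_le_mul_of_nonneg_right hB2 (hPp z hz).le
    linarith
  have m2 : MonotoneOn (fun z => B * P z + G z) (Set.Ici z0) := by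
    apply mono_aux _ _ z0 (fun z hz => ((dP z hz).const_mul B).add (dG z hz))
    intro z hz
    have h1 := mul_le_mul_of_nonneg_left (dP' z hz) hBn
    have h2 := (abs_le.1 (dG' z hz)).1
    have h3 := mul_le_mul_of_nonneg_right hB2 (hPp z hz).le
    linarith
  refine ⟨z0, B, hz0p, fun z hz => ?_⟩
  have hzp : 0 < z := by linarith
  have a1 := m1 (Set.mem_Ici.2 le_rfl) (Set.mem_Ici.2 hz) hz
  have a2 := m2 (Set.mem_Ici.2 le_rfl) (Set.mem_Ici.2 hz) hz
  simp only at a1 a2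
  have e : G z = (z ^ (a+1) * ph (a+1) b (-z)) * P z := by
    simp only [hG, hP]
    rw [show ph c b z = Real.exp z * ph (a+1) b (-z) from kummer (a+1) b hb z,
      show c = q + (a+1) by rw [hq]; ring, Real.rpow_add hzp]
    ring
  have hg := abs_le.1 hB0
  have : |G z| ≤ B * P z := abs_le.2 ⟨by linarith, by linarith⟩
  rw [e, abs_mul, abs_of_pos (hPp z hz)] at this
  exact le_of_mul_le_mul_right this (hPp z hz)

lemma bd_down (a b : ℝ) (hb : 0 < b) (h : Bd (a+1) b) : Bd a b := by
  obtain ⟨C, hC⟩ := lm_of_bd a b hb h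
  exact bd_of_lm a b C hC

/-- bounds for `-1 < a ≤ 0` -/
lemma base_bounds (a b : ℝ) (hb : 0 < b) (h1 : -1 < a) (h0 : a ≤ 0) (z : ℝ) (hz : 0 < z) :
    1 ≤ ph a b (-z) ∧ ph a b (-z) ≤ 1 + z / b := by
  have hr1 : ∀ n, 1 ≤ rr (b - a) b n := by
    intro n
    induction n with
    | zero => simp [rr]
    | succ n ih =>
      rw [rr_succ]
      have : 1 ≤ (b - a + n) / (b + n) := by
        rw [le_div_iff₀ (by positivity)]; linarith
      nlinarith
  have hr2 : ∀ n, rr (b - a) b n ≤ 1 + n / b := by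
    intro n
    induction n with
    | zero => simp [rr]
    | succ n ih =>
      rw [rr_succ]
      have hn : (0:ℝ) < b + n := by positivity
      have h3 : (b - a + n) / (b + n) ≤ (b + (n + 1)) / (b + n) := by
        gcongr ?_ / _; linarith
      have h4 : 0 ≤ (b - a + n) / (b + n) := by
        apply div_nonneg _ hn.le; linarith
      calc _ ≤ (1 + n / b) * ((b + (n + 1)) / (b + n)) := by
            apply mul_le_mul ih h3 h4; positivity
        _ = _ := by push_cast; field_simp
  have hs := (ph_summable (b-a) b hb z).of_norm
  have he : HasSum (fun n : ℕ => z ^ n / (n.factorial : ℝ)) (Real.exp z) := by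
    rw [Real.exp_eq_exp_ℝ]; exact NormedSpace.expSeries_div_hasSum_exp z
  have hk := kummer a b hb z
  have hez := Real.exp_pos z
  have he2 : HasSum (fun n : ℕ => (1 + n / b) * z ^ n / (n.factorial : ℝ)) (Real.exp z * (1 + z / b)) := by
    have : HasSum (fun n : ℕ => n * z ^ n / (n.factorial : ℝ)) (z * Real.exp z) := by
      rw [← hasSum_nat_add_iff' 1]
      simp only [Finset.range_one, Finset.sum_singleton, Nat.cast_zero, zero_mul, zero_div, sub_zero]
      convert! he.mul_left z using 1
      ext n
      rw [Nat.factorial_succ]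
      push_cast
      have : (n.factorial : ℝ) ≠ 0 := by positivity
      field_simp
      ring
    convert! he.add (this.mul_left (1/b)) using 1
    · ext n; ring
    · ring
  have l : Real.exp z ≤ ph (b-a) b z := by
    refine hasSum_le (fun n => ?_) he hs.hasSum
    have := hr1 n
    have : 0 < z ^ n := by positivity
    gcongr
    nlinarith
  have u : ph (b-a) b z ≤ Real.exp z * (1 + z / b) := by
    refine hasSum_le (fun n => ?_) hs.hasSum he2
    gcongr
    exact hr2 n
  rw [hk] at l u
  exact ⟨by nlinarith, le_of_mul_le_mul_left u hez⟩

lemma ph_zero (b z : ℝ) : ph 0 b z = 1 := by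
  unfold ph
  rw [tsum_eq_single 0]
  · simp [rr]
  · intro n hn
    obtain ⟨m, rfl⟩ := Nat.exists_eq_succ_of_ne_zero hn
    simp [rr, Finset.prod_range_succ']

lemma bd_base (a b : ℝ) (hb : 0 < b) (h1 : -1 < a) (h0 : a ≤ 0) : Bd a b := by
  rcases h0.lt_or_eq with h0 | h0
  · have : Bd (a-1) b := by
      obtain ⟨C, D, h⟩ := conv_aux (fun z => z ^ (a-1) * ph (a-1) b (-z))
        (fun z => (a-1) * z ^ (a-1-1) * ph (a-1+1) b (-z))
        1 (|a-1| * (1 + 1 / b)) a one_pos h0 (fun z hz => dneg (a-1) b hb z (by linarith)) (by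
          intro z hz
          have hzp : 0 < z := by linarith
          obtain ⟨l, u⟩ := base_bounds a b hb h1 h0.le z hzp
          rw [sub_add_cancel, abs_mul, abs_mul, abs_of_nonneg (Real.rpow_nonneg hzp.le _),
            abs_of_pos (by linarith : 0 < ph a b (-z))]
          have e : z ^ (a-1) = z ^ (a-1-1) * z := by rw [← Real.rpow_add_one hzp.ne']; ring_nf
          rw [e]
          have : ph a b (-z) ≤ (1 + 1 / b) * z := by
            refine u.trans ?_
            rw [add_mul]; gcongr
            · linarith
            · rw [div_mul_eq_mul_div, one_mul]
          calc _ ≤ |a-1| * z ^ (a-1-1) * ((1 + 1 / b) * z) := by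
                have := Real.rpow_nonneg hzp.le (a-1-1); gcongr
            _ = _ := by ring)
      refine ⟨1, |D| + |C|, one_pos, fun z hz => ?_⟩
      have h1 := h z hz
      have h2 : z ^ a ≤ 1 := Real.rpow_le_one_of_one_le_of_nonpos (by linarith) h0.le
      have h3 : 0 ≤ z ^ a := Real.rpow_nonneg (by linarith) _
      have h4 : D * z ^ a ≤ |D| := by
        calc D * z ^ a ≤ |D| * z ^ a := by gcongr; exact le_abs_self D
          _ ≤ |D| * 1 := by gcongr
          _ = _ := mul_one _
      have h5 := abs_add_le (z ^ (a-1) * ph (a-1) b (-z) - C) C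
      rw [sub_add_cancel] at h5
      linarith
    have := bd_up (a-1) b hb this
    rwa [sub_add_cancel] at this
  · subst h0
    exact ⟨1, 1, one_pos, fun z hz => by simp [ph_zero]⟩

lemma bd_nat_up (a b : ℝ) (hb : 0 < b) (h : Bd a b) (n : ℕ) : Bd (a + n) b := by
  induction n with
  | zero => simpa using h
  | succ n ih => have := bd_up _ b hb ih; push_cast; rwa [← add_assoc]

lemma bd_nat_down (a b : ℝ) (hb : 0 < b) (h : Bd a b) (n : ℕ) : Bd (a - n) b := by
  induction n with
  | zero => simpa using h
  | succ n ih =>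
    apply bd_down _ b hb
    convert! ih using 1
    push_cast; ring

lemma three (a b : ℝ) (hb : 0 < b) (z : ℝ) :
    (b - a) * ph (a-1) b (-z) = (z + (b - a) - a) * ph a b (-z) + a * ph (a+1) b (-z) := by
  obtain ⟨d1, hd1, h1⟩ := ph_rel a b hb (-z)
  obtain ⟨d2, hd2, h2⟩ := ph_rel (b - a) b hb z
  have e : ph (b-a) b = fun z => Real.exp z * ph a b (-z) := funext (kummer a b hb)
  have h0 := (Real.hasDerivAt_exp z).mul (hd1.comp z (hasDerivAt_neg z))
  rw [e] at hd2
  have hu := hd2.unique h0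
  simp only [Function.comp] at hu
  rw [show b - a + 1 = b - (a - 1) by ring, kummer (a-1) b hb, kummer a b hb, hu] at h2
  have h3 : Real.exp z * (z * (ph a b (-z) - d1)) =
      Real.exp z * ((b-a) * ph (a-1) b (-z) - (b-a) * ph a b (-z)) := by
    linear_combination h2
  have h4 := mul_left_cancel₀ (Real.exp_pos z).ne' h3
  linear_combination -h4 + h1

lemma lm_tendsto (a b C : ℝ) (h : Lm a b C) :
    Tendsto (fun z => z ^ a * ph a b (-z)) atTop (nhds C) := by
  obtain ⟨z0, D, hz0, h⟩ := h
  rw [tendsto_iff_norm_sub_tendsto_zero]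
  have h1 : Tendsto (fun z : ℝ => D * z ^ (-1:ℝ)) atTop (nhds 0) := by
    simpa using (tendsto_rpow_neg_atTop (one_pos)).const_mul D
  refine squeeze_zero' (Eventually.of_forall fun _ => norm_nonneg _) ?_ h1
  filter_upwards [eventually_ge_atTop z0] with z hz
  exact h z hz

lemma lm_step (a b C C' : ℝ) (hb : 0 < b) (hbd : Bd (a+1) b) (h : Lm a b C) (h' : Lm (a-1) b C') :
    (b - a) * C' = C := by
  obtain ⟨C2, h2⟩ := lm_of_bd (a+1) b hb (bd_up _ b hb hbd)
  have t := lm_tendsto _ _ _ h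
  have t' := (lm_tendsto _ _ _ h').const_mul (b - a)
  have t2 := lm_tendsto _ _ _ h2
  have i1 : Tendsto (fun z : ℝ => z⁻¹) atTop (nhds 0) := tendsto_inv_atTop_zero
  have r := (t.mul ((i1.const_mul (b - a - a)).const_add 1)).add ((t2.mul (i1.mul i1)).const_mul a)
  have r' : Tendsto (fun z => (b - a) * (z ^ (a-1) * ph (a-1) b (-z))) atTop (nhds C) := by
    have e : C * (1 + (b - a - a) * 0) + a * (C2 * (0 * 0)) = C := by ring
    rw [e] at r
    refine r.congr' ?_
    filter_upwards [eventually_gt_atTop 0] with z hz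
    have e1 : z ^ a = z ^ (a-1) * z := by rw [← Real.rpow_add_one hz.ne']; ring_nf
    have e2 : z ^ (a+1) = z ^ (a-1) * z * z := by rw [← e1, Real.rpow_add_one hz.ne']
    rw [e1, e2]
    have := three a b hb z
    have hz' := hz.ne'
    field_simp
    linear_combination -this
  exact tendsto_nhds_unique t' r'

lemma lm_base (a b C : ℝ) (hb : 0 < b) (h1 : -1 < a) (h0 : a ≤ 0) (h : Lm a b C) : C ≠ 0 := by
  rintro rfl
  obtain ⟨z0, D, hz0, h⟩ := h
  have ht : Tendsto (fun z : ℝ => z ^ (a+1)) atTop atTop := tendsto_rpow_atTop (by linarith)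
  obtain ⟨z, hz, hz1⟩ := ((ht.eventually_gt_atTop D).and (eventually_ge_atTop z0)).exists
  have hzp : 0 < z := by linarith
  have := h z hz1
  have l := (base_bounds a b hb h1 h0 z hzp).1
  have hp := Real.rpow_pos_of_pos hzp a
  rw [sub_zero, abs_of_pos (by positivity), Real.rpow_neg_one, ← div_eq_mul_inv, le_div_iff₀ hzp] at this
  rw [Real.rpow_add_one hzp.ne'] at hz
  have : z ^ a * z ≤ z ^ a * ph a b (-z) * z := by gcongr; nlinarith
  linarith

lemma frac_rep (a : ℝ) : ∃ a0 : ℝ, -1 < a0 ∧ a0 ≤ 0 ∧ ∃ n : ℕ, a = a0 + n ∨ a = a0 - n := by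
  refine ⟨a - ⌈a⌉, ?_, ?_, ?_⟩
  · have := Int.ceil_lt_add_one a; linarith
  · have := Int.le_ceil a; linarith
  · obtain ⟨n, hn | hn⟩ := Int.eq_nat_or_neg ⌈a⌉
    · refine ⟨n, Or.inl ?_⟩
      rw [hn]; push_cast; ring
    · refine ⟨n, Or.inr ?_⟩
      rw [hn]; push_cast; ring

lemma bd_all (a b : ℝ) (hb : 0 < b) : Bd a b := by
  obtain ⟨a0, h1, h0, n, rfl | rfl⟩ := frac_rep a
  · exact bd_nat_up _ b hb (bd_base a0 b hb h1 h0) n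
  · exact bd_nat_down _ b hb (bd_base a0 b hb h1 h0) n

lemma ne_up (a b : ℝ) (hb : 0 < b) (h : ∀ C, Lm a b C → C ≠ 0) (n : ℕ) :
    (∀ m : ℕ, b - (a + n) ≠ -m) → ∀ C, Lm (a + n) b C → C ≠ 0 := by
  induction n with
  | zero => intro _; simpa using h
  | succ n ih =>
    intro hm C hC
    have ih' := ih (fun m hm' => hm (m+1) (by push_cast; linarith))
    obtain ⟨C', hC'⟩ := lm_of_bd (a + n) b hb (bd_all _ b hb)
    have hs := lm_step (a + (n+1 : ℕ)) b C C' hb (bd_all _ b hb) hC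
      (by convert! hC' using 1; push_cast; ring)
    rw [← hs]
    refine mul_ne_zero ?_ (ih' C' hC')
    simpa using hm 0

lemma ne_down (a b : ℝ) (hb : 0 < b) (h : ∀ C, Lm a b C → C ≠ 0) (n : ℕ) :
    ∀ C, Lm (a - n) b C → C ≠ 0 := by
  induction n with
  | zero => simpa using h
  | succ n ih =>
    rintro C hC rfl
    obtain ⟨C', hC'⟩ := lm_of_bd (a - n) b hb (bd_all _ b hb)
    have hs := lm_step (a - n) b C' 0 hb (bd_all _ b hb) hC'
      (by convert! hC using 1; push_cast; ring)
    exact ih C' hC' (by rw [← hs, mul_zero])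

lemma lm_main (a b : ℝ) (hb : 0 < b) (hm : ∀ m : ℕ, b - a ≠ -m) : ∃ C, C ≠ 0 ∧ Lm a b C := by
  obtain ⟨C, hC⟩ := lm_of_bd a b hb (bd_all _ b hb)
  refine ⟨C, ?_, hC⟩
  obtain ⟨a0, h1, h0, n, rfl | rfl⟩ := frac_rep a
  · exact ne_up a0 b hb (fun C => lm_base a0 b C hb h1 h0) n hm C hC
  · exact ne_down a0 b hb (fun C => lm_base a0 b C hb h1 h0) n C hC

lemma final_aux (a b : ℝ) (hb : 0 < b) (hm : ∀ m : ℕ, b - a ≠ -m) (s : ℝ) (hs : s ≠ 0) (f : ℝ → ℝ)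
    (hf : ∀ x > 0, f x = s * ((x ^ 2) ^ a * ph a b (-(x ^ 2 / 2)))) :
    ∃ C : ℝ, C ≠ 0 ∧ (fun x : ℝ => f x - C) =O[atTop] fun x : ℝ => x ^ (-2 : ℝ) := by
  obtain ⟨C, hC, z0, D, hz0, h⟩ := lm_main a b hb hm
  have h2a : (2:ℝ) ^ a ≠ 0 := (Real.rpow_pos_of_pos two_pos a).ne'
  refine ⟨s * 2 ^ a * C, mul_ne_zero (mul_ne_zero hs h2a) hC, ?_⟩
  refine Asymptotics.IsBigO.of_bound (|s * 2 ^ a| * (D * 2)) ?_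
  filter_upwards [eventually_ge_atTop (2 * z0)] with x hx
  have hxp : 0 < x := by linarith
  have hx2 : z0 ≤ x ^ 2 / 2 := by nlinarith
  have e : (x ^ 2) ^ a = 2 ^ a * (x ^ 2 / 2) ^ a := by
    rw [← Real.mul_rpow (by norm_num) (by positivity)]; congr 1; ring
  have e2 : (x ^ 2 / 2) ^ (-1:ℝ) = 2 * x ^ (-2:ℝ) := by
    rw [Real.rpow_neg_one, Real.rpow_neg hxp.le, Real.rpow_two]; field_simp
  have := h _ hx2
  rw [e2] at this
  rw [hf x hxp, e, Real.norm_eq_abs, Real.norm_eq_abs, abs_of_nonneg (Real.rpow_nonneg hxp.le (-2))]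
  rw [show s * (2 ^ a * (x ^ 2 / 2) ^ a * ph a b (-(x ^ 2 / 2))) - s * 2 ^ a * C
    = s * 2 ^ a * ((x ^ 2 / 2) ^ a * ph a b (-(x ^ 2 / 2)) - C) by ring, abs_mul]
  calc _ ≤ |s * 2 ^ a| * (D * (2 * x ^ (-2:ℝ))) := by gcongr
    _ = _ := by ring

lemma lamE_eq (p x : ℝ) : LamE p x =
    (1 / Real.sqrt (2 * Real.pi)) * ph ((p+1)/2) (1/2) (-(x ^ 2 / 2)) := by
  unfold LamE ph
  congr 2
  ext n
  have : (∏ k ∈ Finset.range n, (p + 2 * (k : ℝ) + 1)) / (Nat.factorial (2 * n) : ℝ)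
      = rr ((p+1)/2) (1/2) n * (1/2) ^ n / (n.factorial : ℝ) := by
    induction n with
    | zero => simp [rr]
    | succ n ih =>
      rw [Finset.prod_range_succ, rr_succ, show 2 * (n+1) = 2 * n + 1 + 1 by ring,
        Nat.factorial_succ, Nat.factorial_succ, Nat.factorial_succ n]
      push_cast
      have h1 : ((2*n).factorial : ℝ) ≠ 0 := by positivity
      have h2 : (n.factorial : ℝ) ≠ 0 := by positivity
      have h3 : (1/2 + n : ℝ) ≠ 0 := by positivity
      have h4 : (2 * n + 1 : ℝ) ≠ 0 := by positivity
      have h5 : (n + 1 : ℝ) ≠ 0 := by positivity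
      have h6 : (2 * n + 1 + 1 : ℝ) ≠ 0 := by positivity
      rw [div_eq_div_iff h1 h2] at ih
      rw [pow_succ]
      trans (rr ((p+1)/2) (1/2) n * (1/2) ^ n / (n.factorial : ℝ)) *
        ((p + 2 * n + 1) / ((2 * n + 1) * (2 * n + 1 + 1)))
      · rw [← (div_eq_div_iff h1 h2).2 ih]; field_simp
      · rw [show (1/2 + n : ℝ) = (2 * n + 1) / 2 by ring,
          show (2 * n + 1 + 1 : ℝ) = 2 * (n + 1) by ring]
        field_simp
        ring
  rw [show -(x ^ 2 / 2) = (-1) * (1/2) * x ^ 2 by ring, mul_pow, mul_pow, ← pow_mul]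
  linear_combination ((-1) ^ n * x ^ (2 * n)) * this

lemma lamO_eq (p x : ℝ) : LamO p x =
    (1 / Real.sqrt (2 * Real.pi)) * (x * ph ((p+2)/2) (3/2) (-(x ^ 2 / 2))) := by
  unfold LamO ph
  rw [← tsum_mul_left (a := x)]
  congr 1
  refine tsum_congr fun n => ?_
  have : (∏ k ∈ Finset.range n, (p + 2 * ((k : ℝ) + 1))) / (Nat.factorial (2 * n + 1) : ℝ)
      = rr ((p+2)/2) (3/2) n * (1/2) ^ n / (n.factorial : ℝ) := by
    induction n with
    | zero => simp [rr]
    | succ n ih =>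
      rw [Finset.prod_range_succ, rr_succ, show 2 * (n+1) + 1 = 2 * n + 1 + 1 + 1 by ring,
        Nat.factorial_succ (2 * n + 1 + 1), Nat.factorial_succ (2 * n + 1), Nat.factorial_succ n]
      push_cast
      have h1 : ((2*n+1).factorial : ℝ) ≠ 0 := by positivity
      have h2 : (n.factorial : ℝ) ≠ 0 := by positivity
      have h3 : (3/2 + n : ℝ) ≠ 0 := by positivity
      have h4 : (2 * n + 1 + 1 : ℝ) ≠ 0 := by positivity
      have h5 : (n + 1 : ℝ) ≠ 0 := by positivity
      have h6 : (2 * n + 3 : ℝ) ≠ 0 := by positivity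
      rw [pow_succ]
      trans (rr ((p+2)/2) (3/2) n * (1/2) ^ n / (n.factorial : ℝ)) *
        ((p + 2 * (n + 1)) / ((2 * n + 3) * (2 * n + 1 + 1)))
      · rw [← ih, show (2 * n + 1 + 1 + 1 : ℝ) = 2 * n + 3 by ring]; field_simp
      · rw [show (3/2 + n : ℝ) = (2 * n + 3) / 2 by ring,
          show (2 * n + 1 + 1 : ℝ) = 2 * (n + 1) by ring]
        field_simp
        ring
  rw [show -(x ^ 2 / 2) = (-1) * (1/2) * x ^ 2 by ring, mul_pow, mul_pow, ← pow_mul, pow_succ]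
  linear_combination ((-1) ^ n * x ^ (2 * n) * x) * this

/-- Asymptotics of the kernels: if `p` is not a nonnegative even integer then
`Λ^e_p(x) = C₁ x^{-p-1}(1 + O(x^{-2}))` as `x → +∞` for some nonzero constant `C₁`,
i.e. `x^{p+1} Λ^e_p(x) - C₁ = O(x^{-2})`; likewise for `Λ^o_p` when `p` is not a
nonnegative odd integer. -/
theorem stmt_4 (p : ℝ) :
    ((∀ n : ℕ, p ≠ 2 * n) → ∃ C₁ : ℝ, C₁ ≠ 0 ∧
      (fun x : ℝ => x ^ (p + 1) * LamE p x - C₁) =O[atTop] fun x : ℝ => x ^ (-2 : ℝ)) ∧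
    ((∀ n : ℕ, p ≠ 2 * n + 1) → ∃ C₂ : ℝ, C₂ ≠ 0 ∧
      (fun x : ℝ => x ^ (p + 1) * LamO p x - C₂) =O[atTop] fun x : ℝ => x ^ (-2 : ℝ)) := by
  have hs : (1 / Real.sqrt (2 * Real.pi)) ≠ 0 := by positivity
  constructor
  · intro hp
    refine final_aux ((p+1)/2) (1/2) (by norm_num) (fun m hm => hp m (by linarith)) _ hs _ ?_
    intro x hx
    rw [lamE_eq, ← Real.rpow_two, ← Real.rpow_mul hx.le, show 2 * ((p+1)/2) = p + 1 by ring]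
    ring
  · intro hp
    refine final_aux ((p+2)/2) (3/2) (by norm_num) (fun m hm => hp m (by linarith)) _ hs _ ?_
    intro x hx
    rw [lamO_eq, ← Real.rpow_two, ← Real.rpow_mul hx.le, show 2 * ((p+2)/2) = p + 1 + 1 by ring,
      Real.rpow_add_one hx.ne' (p+1)]
    ring
end

section
/- The function Λ^e_p belongs to L¹(ℝ) for every p ≥ 0, and Λ^o_p belongs to L¹(ℝ) for every p > 0. On the other hand, Λ^o_0 does not belong to L¹(ℝ), and for every p < 0 neither Λ^e_p nor Λ^o_p belongs to L¹(ℝ). -/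
open MeasureTheory Filter Real

/-- Ratio of Pochhammer symbols. -/
noncomputable def uu (a b : ℝ) (n : ℕ) : ℝ := ∏ k ∈ Finset.range n, ((a + k) / (b + k))

lemma uu_zero (a b : ℝ) : uu a b 0 = 1 := by simp [uu]

lemma uu_succ (a b : ℝ) (n : ℕ) : uu a b (n + 1) = uu a b n * ((a + n) / (b + n)) := by
  rw [uu, Finset.prod_range_succ, uu]

lemma uu_succ' (a b : ℝ) (n : ℕ) : uu a b (n + 1) = (a / b) * uu (a + 1) (b + 1) n := by
  unfold uu
  rw [Finset.prod_range_succ', mul_comm]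
  congr 1
  · simp
  · apply Finset.prod_congr rfl
    intro k _
    push_cast
    rw [add_assoc a, add_assoc b, add_comm (1 : ℝ)]

lemma vander (n : ℕ) : ∀ (b c : ℝ), 0 < b →
    ∑ k ∈ Finset.range (n + 1), (n.choose k : ℝ) * ((-1) ^ k * uu c b k) = uu (b - c) b n := by
  induction n with
  | zero => intro b c hb; simp [uu_zero]
  | succ n ih =>
    intro b c hb
    rw [Finset.sum_choose_succ_mul (fun k _ => (-1 : ℝ) ^ k * uu c b k) n, ih b c hb]
    have h2 := ih (b + 1) (c + 1) (by linarith)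
    have h3 : ∑ i ∈ Finset.range (n + 1), (n.choose i : ℝ) * ((-1) ^ (i + 1) * uu c b (i + 1))
        = - (c / b) * uu (b - c) (b + 1) n := by
      rw [show b - c = b + 1 - (c + 1) by ring, ← h2, Finset.mul_sum]
      apply Finset.sum_congr rfl
      intro i _
      rw [uu_succ' c b]
      ring
    rw [h3]
    have h4 : uu (b - c) (b + 1) n = uu (b - c) b n * (b / (b + n)) := by
      clear ih h2 h3
      have hb0 : b ≠ 0 := hb.ne'
      induction n with
      | zero => simp [uu_zero, hb0]
      | succ n ih2 =>
        rw [uu_succ, uu_succ, ih2]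
        have : b + n ≠ 0 := by positivity
        have : b + 1 + n ≠ 0 := by positivity
        have : b + (n + 1) ≠ 0 := by positivity
        push_cast
        field_simp
        ring
    rw [h4, uu_succ]
    have : b + n ≠ 0 := by positivity
    field_simp
    ring

lemma uu_bound (a b : ℝ) (hb : 0 < b) (n : ℕ) : |uu a b n| ≤ (|a| / b + 1) ^ n := by
  unfold uu
  rw [Finset.abs_prod]
  calc _ ≤ ∏ k ∈ Finset.range n, (|a| / b + 1) := by
        apply Finset.prod_le_prod
        · intros; positivity
        · intro k _
          rw [abs_div, abs_of_pos (show 0 < b + k by positivity)]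
          rw [div_le_iff₀ (by positivity)]
          have h1 : |a + k| ≤ |a| + k := by
            refine (abs_add_le _ _).trans ?_
            simp
          have h2 : (|a| / b + 1) * (b + k) = |a| + |a| / b * k + b + k := by
            field_simp
            ring
          have h3 : 0 ≤ |a| / b * k := by positivity
          linarith
    _ = _ := by simp

lemma summable_uu (a b : ℝ) (hb : 0 < b) (z : ℝ) :
    Summable (fun n : ℕ => ‖uu a b n * z ^ n / (n.factorial : ℝ)‖) := by
  refine Summable.of_nonneg_of_le (fun n => norm_nonneg _) (fun n => ?_)
    (Real.summable_pow_div_factorial ((|a| / b + 1) * |z|))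
  rw [norm_div, norm_mul, norm_pow, mul_pow]
  simp only [Real.norm_eq_abs, Nat.abs_cast]
  gcongr
  exact uu_bound a b hb n

lemma kummer_s5 (a b : ℝ) (hb : 0 < b) (z : ℝ) :
    HasSum (fun n : ℕ => rexp (-z) * (uu (b - a) b n * z ^ n / (n.factorial : ℝ)))
      (∑' n : ℕ, uu a b n * (-z) ^ n / (n.factorial : ℝ)) := by
  have hs := summable_uu (b - a) b hb z
  have h1 := tsum_mul_tsum_eq_tsum_sum_range_of_summable_norm hs
    (Real.summable_pow_div_factorial (-z)).norm
  have h2 : ∀ n : ℕ, ∑ k ∈ Finset.range (n + 1), uu (b - a) b k * z ^ k / (k.factorial : ℝ) *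
      ((-z) ^ (n - k) / ((n - k).factorial : ℝ)) = uu a b n * (-z) ^ n / (n.factorial : ℝ) := by
    intro n
    have h3 := vander n b (b - a) hb
    rw [show b - (b - a) = a by ring] at h3
    rw [← h3, Finset.sum_mul, Finset.sum_div]
    apply Finset.sum_congr rfl
    intro k hk
    have hk' : k ≤ n := by simpa [Nat.lt_succ_iff] using hk
    rw [Nat.cast_choose ℝ hk']
    have e : (-z) ^ n = (-1) ^ k * z ^ k * (-z) ^ (n - k) := by
      rw [← mul_pow, neg_one_mul, ← pow_add, Nat.add_sub_cancel' hk']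
    have e2 : ((-1 : ℝ) ^ k) * (-1) ^ k = 1 := by
      rw [← mul_pow]; simp
    rw [e]
    have : (n.factorial : ℝ) ≠ 0 := by positivity
    have : (k.factorial : ℝ) ≠ 0 := by positivity
    have : ((n - k).factorial : ℝ) ≠ 0 := by positivity
    field_simp
    linear_combination (-(uu (b - a) b k * z ^ k * (-z) ^ (n - k))) * e2
  have he : rexp (-z) = ∑' n : ℕ, (-z) ^ n / (n.factorial : ℝ) := by
    rw [Real.exp_eq_exp_ℝ, NormedSpace.exp_eq_tsum_div]
  simp_rw [h2] at h1
  rw [← h1, ← he, mul_comm]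
  exact hs.of_norm.hasSum.mul_left _

lemma uu_summable_abs (a b : ℝ) (hb : 0 < b) (h : a + 1 < b) : Summable (fun n => |uu a b n|) := by
  obtain ⟨N, hN⟩ := exists_nat_ge (-a)
  rw [← summable_nat_add_iff N]
  have hd : 0 < b - 1 - a := by linarith
  refine summable_of_sum_range_le (c := (N + b - 1) * |uu a b N| / (b - 1 - a))
    (fun n => abs_nonneg _) ?_
  have key : ∀ m : ℕ, (b - 1 - a) * ∑ i ∈ Finset.range m, |uu a b (i + N)|
      = (N + b - 1) * |uu a b N| - (m + N + b - 1) * |uu a b (m + N)| := by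
    intro m
    induction m with
    | zero => simp
    | succ m ih =>
      rw [Finset.sum_range_succ, mul_add, ih, show m + 1 + N = (m + N) + 1 by ring, uu_succ]
      have h1 : 0 ≤ a + ((m + N : ℕ) : ℝ) := by
        push_cast
        have : (0 : ℝ) ≤ m := by positivity
        linarith
      have h2 : 0 < b + ((m + N : ℕ) : ℝ) := by positivity
      rw [abs_mul, abs_div, abs_of_nonneg h1, abs_of_pos h2]
      push_cast at h2 ⊢
      field_simp
      ring
  intro m
  rw [le_div_iff₀ hd, mul_comm, key]
  have h1 : 0 ≤ (m + N + b - 1) := by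
    have : (0 : ℝ) ≤ m := by positivity
    linarith
  have := mul_nonneg h1 (abs_nonneg (uu a b (m + N)))
  linarith

lemma uu_pos (a b : ℝ) (ha : 0 < a) (hb : 0 < b) (n : ℕ) : 0 < uu a b n := by
  unfold uu
  apply Finset.prod_pos
  intros; positivity

lemma uu_not_summable (a b : ℝ) (ha : 0 < a) (hb : 0 < b) (h : b ≤ a + 1) :
    ¬ Summable (fun n => |uu a b n|) := by
  intro hs
  have key : ∀ n : ℕ, a ≤ (n + b) * uu a b (n + 1) := by
    intro n
    induction n with
    | zero => rw [uu_succ, uu_zero]; simp; field_simp; exact le_rfl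
    | succ n ih =>
      refine ih.trans ?_
      rw [uu_succ a b (n + 1)]
      have := uu_pos a b ha hb (n + 1)
      push_cast
      have e : (n + 1 + b) * (uu a b (n + 1) * ((a + (n + 1)) / (b + (n + 1))))
        = (a + (n + 1)) * uu a b (n + 1) := by
        have : b + ((n : ℝ) + 1) ≠ 0 := by positivity
        field_simp
        ring
      rw [e]
      gcongr ?_ * _
      linarith
  obtain ⟨M, hM⟩ := exists_nat_ge b
  have h1 : Summable (fun n : ℕ => a * ((1 : ℝ) / ((n + M : ℕ) : ℝ))) := by
    have h2 := (summable_nat_add_iff 1).2 hs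
    rw [← summable_nat_add_iff 1]
    rw [← summable_nat_add_iff 1] at h2
    refine Summable.of_nonneg_of_le (fun n => by positivity) (fun n => ?_) h2
    rw [mul_one_div, div_le_iff₀ (by positivity)]
    refine (key (n + 1)).trans ?_
    rw [abs_of_pos (uu_pos a b ha hb _), mul_comm]
    have := uu_pos a b ha hb (n + 1 + 1)
    gcongr
    push_cast
    linarith
  rw [summable_mul_left_iff ha.ne', summable_nat_add_iff (f := fun n : ℕ => (1 : ℝ) / (n : ℝ)) M] at h1
  exact Real.not_summable_one_div_natCast h1

/-- basic functions -/
noncomputable def gg (e n : ℕ) (x : ℝ) : ℝ :=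
  x ^ e * (rexp (-(x ^ 2 / 2)) * ((x ^ 2 / 2) ^ n / (n.factorial : ℝ)))

lemma gg_eq (e n : ℕ) (x : ℝ) : gg e n x =
    (1 / (2 ^ n * n.factorial)) * (x ^ ((2 * n + e : ℕ) : ℝ) * rexp (-(1 / 2) * x ^ 2)) := by
  rw [gg, Real.rpow_natCast, pow_add, pow_mul, div_pow,
    show -(x ^ 2 / 2) = -(1 / 2) * x ^ 2 by ring]
  field_simp

lemma gg_integrable (e n : ℕ) : Integrable (gg e n) := by
  rw [show gg e n = _ from funext (gg_eq e n)]
  apply Integrable.const_mul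
  apply integrable_rpow_mul_exp_neg_mul_sq (by norm_num)
  have : (0 : ℝ) ≤ ((2 * n + e : ℕ) : ℝ) := by positivity
  linarith

lemma gg_abs (e n : ℕ) (x : ℝ) : ‖gg e n x‖ = gg e n |x| := by
  unfold gg
  rw [norm_mul, norm_pow, Real.norm_eq_abs, Real.norm_of_nonneg (by positivity), sq_abs]

lemma gg_int (e : ℕ) : ∃ K : ℝ, 0 < K ∧
    ∀ n, ∫ x, ‖gg e n x‖ = K * uu ((e + 1) / 2) 1 n := by
  have hd : (0 : ℝ) < (e + 1) / 2 := by positivity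
  refine ⟨2 * ((1 / 2 : ℝ) ^ (-((e + 1) / 2 : ℝ)) * (1 / 2) * Real.Gamma ((e + 1) / 2)), ?_, ?_⟩
  · have := Real.Gamma_pos_of_pos hd
    positivity
  intro n
  simp_rw [gg_abs]
  rw [integral_comp_abs (f := gg e n)]
  simp_rw [gg_eq]
  rw [integral_const_mul]
  have h1 := integral_rpow_mul_exp_neg_mul_rpow (p := 2) (q := ((2 * n + e : ℕ) : ℝ)) (b := 1 / 2)
    (by norm_num) (by have : (0 : ℝ) ≤ ((2 * n + e : ℕ) : ℝ) := by positivity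
                      linarith) (by norm_num)
  simp_rw [Real.rpow_two] at h1
  rw [h1]
  have h2 : Real.Gamma ((((2 * n + e : ℕ) : ℝ) + 1) / 2)
      = Real.Gamma ((e + 1) / 2) * (n.factorial * uu ((e + 1) / 2) 1 n) := by
    rw [show (((2 * n + e : ℕ) : ℝ) + 1) / 2 = (e + 1) / 2 + n by push_cast; ring]
    clear h1
    induction n with
    | zero => simp [uu_zero]
    | succ n ih =>
      push_cast
      rw [← add_assoc, Real.Gamma_add_one (by positivity), ih, uu_succ, Nat.factorial_succ]
      push_cast
      have : (1 : ℝ) + n ≠ 0 := by positivity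
      field_simp
      ring
  have h3 : (1 / 2 : ℝ) ^ (-(((2 * n + e : ℕ) : ℝ) + 1) / 2)
      = (1 / 2 : ℝ) ^ (-((e + 1) / 2 : ℝ)) * 2 ^ n := by
    rw [show -(((2 * n + e : ℕ) : ℝ) + 1) / 2 = -((e + 1) / 2 : ℝ) + (-(n : ℝ)) by push_cast; ring,
      Real.rpow_add (by norm_num), Real.rpow_neg (by norm_num) (n : ℝ), Real.rpow_natCast]
    simp
  rw [h2, h3]
  field_simp

lemma integrable_of_series {F : ℕ → ℝ → ℝ} {f : ℝ → ℝ} (hF : ∀ n, Integrable (F n))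
    (hsum : ∀ x, HasSum (fun n => F n x) (f x)) (hs : Summable (fun n => ∫ x, ‖F n x‖)) :
    Integrable f := by
  refine ⟨?_, ?_⟩
  · refine aestronglyMeasurable_of_tendsto_ae atTop
      (f := fun (N : ℕ) x => ∑ i ∈ Finset.range N, F i x) (fun N => ?_)
      (Eventually.of_forall fun x => (hsum x).tendsto_sum_nat)
    exact (integrable_finsetSum _ (fun i _ => hF i)).aestronglyMeasurable
  · rw [hasFiniteIntegral_iff_enorm]
    calc ∫⁻ x, ‖f x‖ₑ ≤ ∫⁻ x, ∑' n, ‖F n x‖ₑ := by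
          apply lintegral_mono
          intro x
          dsimp only
          rw [← (hsum x).tsum_eq]
          exact enorm_tsum_le_tsum_enorm
      _ = ∑' n, ∫⁻ x, ‖F n x‖ₑ := lintegral_tsum (fun n => (hF n).1.enorm)
      _ = ∑' n, ENNReal.ofReal (∫ x, ‖F n x‖) := by
          congr 1
          funext n
          rw [ofReal_integral_norm_eq_lintegral_enorm (hF n)]
      _ < ⊤ := by
          rw [← ENNReal.ofReal_tsum_of_nonneg (fun n => integral_nonneg fun _ => norm_nonneg _) hs]
          exact ENNReal.ofReal_lt_top

lemma hasSum_congr_aux {f g : ℕ → ℝ} {a : ℝ} (h : HasSum f a) (hfg : ∀ n, g n = f n) :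
    HasSum g a := by
  rw [funext hfg]; exact h

lemma main_aux (e : ℕ) (c b g : ℝ) (hc : c ≠ 0) (f : ℝ → ℝ)
    (hf : ∀ x, HasSum (fun n => uu g b n * gg e n x) (c * f x))
    (b' : ℝ) (hb : 0 < b) (hb' : 0 < b') (hu : ∀ n, uu g b n * uu ((e + 1) / 2) 1 n = uu g b' n) :
    (g + 1 < b' → Integrable f) ∧ (0 < g → b' ≤ g + 1 → ¬ Integrable f) := by
  obtain ⟨K, hK, hI⟩ := gg_int e
  have hn : ∀ n, ∫ x, ‖uu g b n * gg e n x‖ = K * |uu g b' n| := by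
    intro n
    simp_rw [norm_mul]
    rw [integral_const_mul, hI, ← hu, abs_mul, Real.norm_eq_abs,
      abs_of_pos (uu_pos ((e + 1) / 2) 1 (by positivity) one_pos n)]
    ring
  refine ⟨fun h => ?_, fun h0 h hint => ?_⟩
  · have := integrable_of_series (fun n => (gg_integrable e n).const_mul (uu g b n)) hf (by
      simp_rw [hn]
      exact (uu_summable_abs g b' hb' h).mul_left K)
    rwa [integrable_const_mul_iff (IsUnit.mk0 c hc)] at this
  · apply uu_not_summable g b' h0 hb' h
    rw [← summable_mul_left_iff hK.ne']
    simp_rw [← hn]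
    refine summable_of_sum_range_le (c := ∫ x, ‖c * f x‖)
      (fun n => integral_nonneg fun _ => norm_nonneg _) (fun N => ?_)
    rw [← integral_finsetSum _ (fun i _ => ((gg_integrable e i).const_mul _).norm)]
    refine integral_mono (integrable_finsetSum _
      (fun i _ => ((gg_integrable e i).const_mul _).norm)) (hint.const_mul c).norm (fun x => ?_)
    have hs : ∃ s : ℝ, |s| ≤ 1 ∧ ∀ n, s * gg e n x = ‖gg e n x‖ := by
      rcases le_total 0 (x ^ e) with hx | hx
      · refine ⟨1, by simp, fun n => ?_⟩
        rw [Real.norm_of_nonneg (by unfold gg; positivity), one_mul]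
      · refine ⟨-1, by simp, fun n => ?_⟩
        rw [Real.norm_of_nonpos, neg_one_mul]
        unfold gg
        exact mul_nonpos_of_nonpos_of_nonneg hx (by positivity)
    obtain ⟨s, hs1, hs2⟩ := hs
    have h5 : HasSum (fun n => ‖uu g b n * gg e n x‖) (s * (c * f x)) := by
      refine hasSum_congr_aux ((hf x).mul_left s) (fun n => ?_)
      rw [norm_mul, Real.norm_of_nonneg (uu_pos g b h0 hb n).le, ← hs2]
      ring
    refine (sum_le_hasSum _ (fun i _ => norm_nonneg _) h5).trans ?_
    refine (le_abs_self _).trans ?_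
    rw [abs_mul s]
    exact mul_le_of_le_one_left (abs_nonneg _) hs1

lemma coefE (p x : ℝ) (n : ℕ) :
    (-1 : ℝ) ^ n * (∏ k ∈ Finset.range n, (p + 2 * (k : ℝ) + 1)) * x ^ (2 * n) /
      (Nat.factorial (2 * n) : ℝ) =
    uu ((p + 1) / 2) (1 / 2) n * (-(x ^ 2 / 2)) ^ n / (n.factorial : ℝ) := by
  induction n with
  | zero => simp [uu_zero]
  | succ n ih =>
    rw [Finset.prod_range_succ, uu_succ, show 2 * (n + 1) = 2 * n + 1 + 1 by ring]
    rw [Nat.factorial_succ, Nat.factorial_succ, Nat.factorial_succ n]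
    have e1 : (-1 : ℝ) ^ (n + 1) * ((∏ k ∈ Finset.range n, (p + 2 * (k : ℝ) + 1)) *
        (p + 2 * n + 1)) * x ^ (2 * n + 1 + 1) /
        (((2 * n + 1 + 1) * ((2 * n + 1) * (2 * n).factorial) : ℕ) : ℝ)
        = ((-1 : ℝ) ^ n * (∏ k ∈ Finset.range n, (p + 2 * (k : ℝ) + 1)) * x ^ (2 * n) /
          (Nat.factorial (2 * n) : ℝ)) *
          (-(p + 2 * n + 1) * x ^ 2 / ((2 * n + 1 + 1) * (2 * n + 1))) := by
      push_cast
      field_simp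
      ring
    rw [e1, ih]
    push_cast
    have : (1 : ℝ) / 2 + n ≠ 0 := by positivity
    have : (1 : ℝ) + n * 2 ≠ 0 := by positivity
    field_simp
    ring

lemma coefO (p x : ℝ) (n : ℕ) :
    (-1 : ℝ) ^ n * (∏ k ∈ Finset.range n, (p + 2 * ((k : ℝ) + 1))) * x ^ (2 * n + 1) /
      (Nat.factorial (2 * n + 1) : ℝ) =
    x * (uu ((p + 2) / 2) (3 / 2) n * (-(x ^ 2 / 2)) ^ n / (n.factorial : ℝ)) := by
  induction n with
  | zero => simp [uu_zero]
  | succ n ih =>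
    rw [Finset.prod_range_succ, uu_succ, show 2 * (n + 1) + 1 = 2 * n + 1 + 1 + 1 by ring]
    rw [Nat.factorial_succ (2 * n + 1 + 1), Nat.factorial_succ (2 * n + 1), Nat.factorial_succ n]
    have e1 : (-1 : ℝ) ^ (n + 1) * ((∏ k ∈ Finset.range n, (p + 2 * ((k : ℝ) + 1))) *
        (p + 2 * (n + 1))) * x ^ (2 * n + 1 + 1 + 1) /
        (((2 * n + 1 + 1 + 1) * ((2 * n + 1 + 1) * (2 * n + 1).factorial) : ℕ) : ℝ)
        = ((-1 : ℝ) ^ n * (∏ k ∈ Finset.range n, (p + 2 * ((k : ℝ) + 1))) * x ^ (2 * n + 1) /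
          (Nat.factorial (2 * n + 1) : ℝ)) *
          (-(p + 2 * (n + 1)) * x ^ 2 / ((2 * n + 1 + 1 + 1) * (2 * n + 1 + 1))) := by
      push_cast
      field_simp
      ring
    rw [e1, ih]
    push_cast
    have : (3 : ℝ) / 2 + n ≠ 0 := by positivity
    have : (3 : ℝ) + n * 2 ≠ 0 := by positivity
    field_simp
    ring

lemma mainE (p : ℝ) : (0 < p → Integrable (fun x => LamE p x)) ∧
    (p < 0 → ¬ Integrable (fun x => LamE p x)) := by
  have hpi : Real.sqrt (2 * Real.pi) ≠ 0 := by positivity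
  have := main_aux 0 (Real.sqrt (2 * Real.pi)) (1 / 2) (-p / 2) hpi (fun x => LamE p x) (by
    intro x
    have h := kummer_s5 ((p + 1) / 2) (1 / 2) (by norm_num) (x ^ 2 / 2)
    unfold LamE
    simp_rw [coefE]
    rw [← mul_assoc, mul_one_div_cancel hpi, one_mul]
    refine hasSum_congr_aux h (fun n => ?_)
    rw [show (1 : ℝ) / 2 - (p + 1) / 2 = -p / 2 by ring]
    unfold gg
    ring) 1 (by norm_num) one_pos (by
    intro n
    induction n with
    | zero => simp [uu_zero]
    | succ n ih =>
      rw [uu_succ, uu_succ _ 1, uu_succ _ 1, ← ih]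
      have : (1 : ℝ) / 2 + n ≠ 0 := by positivity
      have : (1 : ℝ) + n * 2 ≠ 0 := by positivity
      have : (1 : ℝ) + n ≠ 0 := by positivity
      push_cast
      field_simp
      ring)
  exact ⟨fun h => this.1 (by linarith), fun h => this.2 (by linarith) (by linarith)⟩

lemma mainE0 : Integrable (fun x => LamE 0 x) := by
  have h0 : (fun x => LamE 0 x) =
      fun x => (1 / Real.sqrt (2 * Real.pi)) * rexp (-(1 / 2) * x ^ 2) := by
    funext x
    unfold LamE
    simp_rw [coefE]
    congr 1
    have h1 : ∀ n, uu ((0 + 1) / 2) (1 / 2) n = 1 := by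
      intro n
      unfold uu
      apply Finset.prod_eq_one
      intro k _
      rw [zero_add]
      apply div_self
      positivity
    simp_rw [h1, one_mul]
    rw [show -(1 / 2) * x ^ 2 = -(x ^ 2 / 2) by ring, Real.exp_eq_exp_ℝ,
      NormedSpace.exp_eq_tsum_div]
  rw [h0]
  exact (integrable_exp_neg_mul_sq (by norm_num)).const_mul _

lemma mainO (p : ℝ) : (0 < p → Integrable (fun x => LamO p x)) ∧
    (p ≤ 0 → ¬ Integrable (fun x => LamO p x)) := by
  have hpi : Real.sqrt (2 * Real.pi) ≠ 0 := by positivity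
  have := main_aux 1 (Real.sqrt (2 * Real.pi)) (3 / 2) ((1 - p) / 2) hpi (fun x => LamO p x) (by
    intro x
    have h := (kummer_s5 ((p + 2) / 2) (3 / 2) (by norm_num) (x ^ 2 / 2)).mul_left x
    unfold LamO
    simp_rw [coefO]
    rw [← mul_assoc, mul_one_div_cancel hpi, one_mul, tsum_mul_left]
    refine hasSum_congr_aux h (fun n => ?_)
    rw [show (3 : ℝ) / 2 - (p + 2) / 2 = (1 - p) / 2 by ring]
    unfold gg
    ring) (3 / 2) (by norm_num) (by norm_num) (by
    intro n
    have : uu (((1 : ℕ) + 1) / 2) 1 n = 1 := by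
      unfold uu
      apply Finset.prod_eq_one
      intro k _
      rw [show (((1 : ℕ) : ℝ) + 1) / 2 = 1 by norm_num]
      apply div_self
      positivity
    rw [this, mul_one])
  exact ⟨fun h => this.1 (by linarith), fun h => this.2 (by linarith) (by linarith)⟩

/-- Integrability of the kernels: `Λ^e_p ∈ L¹(ℝ)` for `p ≥ 0`, `Λ^o_p ∈ L¹(ℝ)` for `p > 0`,
`Λ^o_0 ∉ L¹(ℝ)`, and for `p < 0` neither `Λ^e_p` nor `Λ^o_p` is in `L¹(ℝ)`. -/
theorem stmt_5 :
    (∀ p : ℝ, 0 ≤ p → Integrable (fun x => LamE p x)) ∧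
    (∀ p : ℝ, 0 < p → Integrable (fun x => LamO p x)) ∧
    ¬ Integrable (fun x => LamO 0 x) ∧
    (∀ p : ℝ, p < 0 → ¬ Integrable (fun x => LamE p x) ∧ ¬ Integrable (fun x => LamO p x)) := by
  refine ⟨fun p hp => ?_, fun p hp => (mainO p).1 hp, (mainO 0).2 le_rfl,
    fun p hp => ⟨(mainE p).2 hp, (mainO p).2 hp.le⟩⟩
  rcases hp.eq_or_lt with h | h
  · rw [← h]; exact mainE0
  · exact (mainE p).1 h
end
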